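/- Fix integers m ≥ 1, d ≥ 2, a matrix S as below, and a real ε > 0. There exist γ > 0 and a constant c > 0, depending only on d, m and ε, such that the following holds. Let p be a prime, 𝓕 ∈ 𝔉(S,m) over F_p a system of total degree d with s_{0,1}·s_{1,2}⋯s_{m−1,m} ≠ 0, and let {w_n} = {(u_{n,0},…,u_{n,m})} be the sequence generated by iterating 𝓕 from some initial vector, assumed purely periodic with period τ. Then for every positive integer N with τ ≥ N ≥ p^{m+ε}, the discrepancy Δ of the N points (u_{n,0}/p, …, u_{n,m}/p) ∈ [0,1)^{m+1}, n = 0,…,N−1, satisfies Δ ≤ c·p^{−γ}. -/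

import Mathlib

open MvPolynomial

/-- Membership of a polynomial system `F = (F_0, …, F_m)` over `R` in the class `𝔉(S,m)`,
where `s i j` records the entries of the upper triangular matrix `S` (for `i < j`). -/
def IsFSystem {R : Type*} [CommRing R] (m : ℕ) (s : ℕ → ℕ → ℕ)
    (F : Fin (m + 1) → MvPolynomial (Fin (m + 1)) R) : Prop :=
  (∃ g h : R, g ≠ 0 ∧
      F (Fin.last m) = MvPolynomial.C g * MvPolynomial.X (Fin.last m) + MvPolynomial.C h) ∧
  ∀ i : Fin (m + 1), (i : ℕ) < m →
    ∃ (G H Gt : MvPolynomial (Fin (m + 1)) R) (g : R),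
      g ≠ 0 ∧
      F i = MvPolynomial.X i * G + H ∧
      (∀ d ∈ G.support, ∀ j : Fin (m + 1), j ≤ i → d j = 0) ∧
      (∀ d ∈ H.support, ∀ j : Fin (m + 1), j ≤ i → d j = 0) ∧
      G = MvPolynomial.C g *
          (∏ j ∈ Finset.univ.filter (fun j : Fin (m + 1) => i < j),
            MvPolynomial.X j ^ s i.val j.val) + Gt ∧
      (∀ d ∈ Gt.support, ∀ j : Fin (m + 1), i < j → d j < s i.val j.val) ∧
      (∀ d ∈ H.support, ∀ j : Fin (m + 1), i < j → d j ≤ s i.val j.val)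

/-- The iterated polynomials `F_i^{(k)}` of a sequence of polynomial systems:
`F_i^{(0)} = X_i` and `F_i^{(k)} = F_{k,i}(F_0^{(k-1)}, …, F_m^{(k-1)})`. -/
noncomputable def iterSys {R : Type*} [CommRing R] (m : ℕ)
    (Fs : ℕ → Fin (m + 1) → MvPolynomial (Fin (m + 1)) R) :
    ℕ → Fin (m + 1) → MvPolynomial (Fin (m + 1)) R
  | 0 => fun i => MvPolynomial.X i
  | k + 1 => fun i => MvPolynomial.bind₁ (iterSys m Fs k) (Fs (k + 1) i)

/-- The additive character `e_p(z) = exp(2πiz/p)` evaluated at an element of `F_p`. -/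
noncomputable def eP (p : ℕ) (x : ZMod p) : ℂ :=
  Complex.exp (2 * Real.pi * Complex.I * (x.val : ℂ) / (p : ℂ))

/-- `e_M(z) = exp(2πiz/M)` for a natural number `z`. -/
noncomputable def eM (M z : ℕ) : ℂ :=
  Complex.exp (2 * Real.pi * Complex.I * (z : ℂ) / (M : ℂ))

/-- The discrepancy of the first `N` points of a sequence in `[0,1)^s`: the supremum over
boxes `B = [a_1,b_1) × ⋯ × [a_s,b_s) ⊆ [0,1)^s` of `|T(B)/N - vol B|`. -/
noncomputable def discrepancy (s N : ℕ) (P : ℕ → Fin s → ℝ) : ℝ :=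
  sSup {D : ℝ | ∃ a b : Fin s → ℝ,
    (∀ j, 0 ≤ a j ∧ a j ≤ b j ∧ b j ≤ 1) ∧
    D = |(((Finset.range N).filter fun n => ∀ j, a j ≤ P n j ∧ P n j < b j).card : ℝ) / N -
        ∏ j, (b j - a j)|}


section GoodMult
open Finset
open scoped Pointwise

/-- `x` maps `V` into at most `L` translates of `V`. -/
def GoodM {p : ℕ} (V : Finset (ZMod p)) (L : ℝ) (x : ZMod p) : Prop :=
  ∃ T : Finset (ZMod p), (T.card : ℝ) ≤ L ∧ ∀ v ∈ V, ∃ t ∈ T, ∃ w ∈ V, x * v = t + w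

variable {p : ℕ} [Fact p.Prime] {V : Finset (ZMod p)} {L L' L0 : ℝ} {x y : ZMod p}

lemma GoodM.mono (h : GoodM V L x) (hL : L ≤ L') : GoodM V L' x := by
  obtain ⟨T, hT, h⟩ := h
  exact ⟨T, hT.trans hL, h⟩

lemma GoodM.neg (hV : ∀ v ∈ V, -v ∈ V) (h : GoodM V L x) : GoodM V L (-x) := by
  obtain ⟨T, hT, h⟩ := h
  refine ⟨T, hT, fun v hv => ?_⟩
  obtain ⟨t, ht, w, hw, e⟩ := h (-v) (hV v hv)
  exact ⟨t, ht, w, hw, by rw [← e]; ring⟩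

lemma GoodM.mul (h : GoodM V L x) (h' : GoodM V L' y) : GoodM V (L * L') (x * y) := by
  obtain ⟨T, hT, h⟩ := h
  obtain ⟨T', hT', h'⟩ := h'
  refine ⟨T + T'.image (fun t => x * t), ?_, fun v hv => ?_⟩
  · have h1 : ((T + T'.image (fun t => x * t)).card : ℝ) ≤ T.card * T'.card := by
      have := (Finset.card_add_le (s := T) (t := T'.image (fun t => x * t))).trans
        (Nat.mul_le_mul_left _ Finset.card_image_le)
      exact_mod_cast this
    exact h1.trans (mul_le_mul hT hT' (by positivity) (le_trans (by positivity) hT))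
  · obtain ⟨t, ht, w, hw, e⟩ := h' v hv
    obtain ⟨t2, ht2, w2, hw2, e2⟩ := h w hw
    refine ⟨t2 + x * t, Finset.add_mem_add ht2 (Finset.mem_image_of_mem _ ht), w2, hw2, ?_⟩
    rw [mul_assoc, e, mul_add, e2]; ring

lemma GoodM.add (hVV : ∃ T0 : Finset (ZMod p), (T0.card : ℝ) ≤ L0 ∧ V + V ⊆ T0 + V)
    (h : GoodM V L x) (h' : GoodM V L' y) : GoodM V (L * L' * L0) (x + y) := by
  obtain ⟨T, hT, h⟩ := h
  obtain ⟨T', hT', h'⟩ := h'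
  obtain ⟨T0, hT0, hVV⟩ := hVV
  refine ⟨T + T' + T0, ?_, fun v hv => ?_⟩
  · have h1 : ((T + T' + T0).card : ℝ) ≤ T.card * T'.card * T0.card := by
      have := (Finset.card_add_le (s := T + T') (t := T0)).trans
        (Nat.mul_le_mul_right _ (Finset.card_add_le (s := T) (t := T')))
      exact_mod_cast this
    have hL : 0 ≤ L := le_trans (by positivity) hT
    have hL' : 0 ≤ L' := le_trans (by positivity) hT'
    refine h1.trans (mul_le_mul (mul_le_mul hT hT' (by positivity) hL) hT0 (by positivity)
      (by positivity))
  · obtain ⟨t, ht, w, hw, e⟩ := h v hv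
    obtain ⟨t2, ht2, w2, hw2, e2⟩ := h' v hv
    obtain ⟨t3, ht3, w3, hw3, e3⟩ := Finset.mem_add.1 (hVV (Finset.add_mem_add hw hw2))
    refine ⟨t + t2 + t3, Finset.add_mem_add (Finset.add_mem_add ht ht2) ht3, w3, hw3, ?_⟩
    rw [add_mul, e, e2]
    linear_combination -e3

lemma GoodM.sub (hV : ∀ v ∈ V, -v ∈ V)
    (hVV : ∃ T0 : Finset (ZMod p), (T0.card : ℝ) ≤ L0 ∧ V + V ⊆ T0 + V)
    (h : GoodM V L x) (h' : GoodM V L' y) : GoodM V (L * L' * L0) (x - y) := by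
  rw [sub_eq_add_neg]; exact h.add hVV (h'.neg hV)

/-- the pivot step -/
lemma pivot_step (hV : ∀ v ∈ V, -v ∈ V) (hL0 : 1 ≤ L0)
    (hVV : ∃ T0 : Finset (ZMod p), (T0.card : ℝ) ≤ L0 ∧ V + V ⊆ T0 + V)
    (hL : L0 ≤ L) (X Y : Finset (ZMod p)) (hX : ∀ x ∈ X, GoodM V L x) (hY : ∀ y ∈ Y, GoodM V L y)
    (hXne : X.Nonempty) (hY2 : 1 < Y.card) :
    (∀ ξ : ZMod p, ∃ x y : ZMod p, GoodM V (L ^ 3) x ∧ GoodM V (L ^ 3) y ∧ y ≠ 0 ∧ x = ξ * y) ∨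
    ∃ X' : Finset (ZMod p), X'.card = X.card * Y.card ∧ ∀ x ∈ X', GoodM V (L ^ 13) x := by
  classical
  have hL1 : 1 ≤ L := hL0.trans hL
  have hVVL : ∃ T0 : Finset (ZMod p), (T0.card : ℝ) ≤ L ∧ V + V ⊆ T0 + V := by
    obtain ⟨T0, h, h'⟩ := hVV
    exact ⟨T0, h.trans hL, h'⟩
  let R : ZMod p → Prop := fun ξ => ∃ x1 ∈ X, ∃ x2 ∈ X, ∃ y1 ∈ Y, ∃ y2 ∈ Y, y1 - y2 ≠ 0 ∧
    x1 - x2 = ξ * (y1 - y2)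
  by_cases hR : ∀ ξ, R ξ
  · left
    intro ξ
    obtain ⟨x1, h1, x2, h2, y1, h3, y2, h4, h5, h6⟩ := hR ξ
    refine ⟨x1 - x2, y1 - y2, ?_, ?_, h5, h6⟩
    · exact ((hX _ h1).sub hV hVVL (hX _ h2)).mono (le_of_eq (by ring))
    · exact ((hY _ h3).sub hV hVVL (hY _ h4)).mono (le_of_eq (by ring))
  · right
    have h0 : R 0 := by
      obtain ⟨x, hx⟩ := hXne
      obtain ⟨y1, hy1, y2, hy2, hne⟩ := Finset.one_lt_card.1 hY2
      exact ⟨x, hx, x, hx, y1, hy1, y2, hy2, sub_ne_zero.2 hne, by simp⟩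
    have hex : ∃ ξ, R ξ ∧ ¬ R (ξ + 1) := by
      by_contra hcon
      push Not at hcon
      apply hR
      have : ∀ n : ℕ, R (n : ZMod p) := by
        intro n
        induction n with
        | zero => simpa using h0
        | succ k ih => simpa using hcon _ ih
      intro ξ
      have := this ξ.val
      rwa [ZMod.natCast_zmod_val] at this
    obtain ⟨ξ, ⟨x1, h1, x2, h2, y1, h3, y2, h4, h5, h6⟩, hξ⟩ := hex
    set b := y1 - y2 with hb
    set c := x1 - x2 + (y1 - y2) with hc
    have hcb : c = (ξ + 1) * b := by rw [hc, h6]; ring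
    refine ⟨(X ×ˢ Y).image (fun q => b * q.1 + c * q.2), ?_, ?_⟩
    · rw [Finset.card_image_of_injOn, Finset.card_product]
      rintro ⟨x, y⟩ hq ⟨x', y'⟩ hq' he
      simp only [Finset.coe_product, Set.mem_prod, Finset.mem_coe] at hq hq'
      simp only at he
      have he2 : b * (x - x' - (ξ + 1) * (y' - y)) = 0 := by
        rw [hcb] at he; linear_combination he
      have he3 : x - x' = (ξ + 1) * (y' - y) := by
        rcases mul_eq_zero.1 he2 with h | h
        · exact absurd h h5
        · linear_combination h
      by_cases hyy : y' - y = 0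
      · rw [hyy, mul_zero] at he3
        rw [sub_eq_zero] at hyy he3
        rw [he3, hyy]
      · exact absurd ⟨x, hq.1, x', hq'.1, y', hq'.2, y, hq.2, hyy, he3⟩ hξ
    · intro z hz
      obtain ⟨⟨x, y⟩, hq, rfl⟩ := Finset.mem_image.1 hz
      rw [Finset.mem_product] at hq
      have gb : GoodM V (L * L * L) b := (hY _ h3).sub hV hVVL (hY _ h4)
      have gc : GoodM V ((L * L * L) * (L * L * L) * L) c :=
        ((hX _ h1).sub hV hVVL (hX _ h2)).add hVVL gb
      refine ((gb.mul (hX _ hq.1)).add hVVL (gc.mul (hY _ hq.2))).mono (le_of_eq (by ring))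

lemma pivot_iter (hV : ∀ v ∈ V, -v ∈ V) (hL0 : 1 ≤ L)
    (hVV : ∃ T0 : Finset (ZMod p), (T0.card : ℝ) ≤ L ∧ V + V ⊆ T0 + V)
    (Y : Finset (ZMod p)) (hY : ∀ y ∈ Y, GoodM V L y) (hY2 : 1 < Y.card) (n : ℕ) :
    (∀ ξ : ZMod p, ∃ x y : ZMod p, GoodM V (L ^ (3 * 13 ^ n)) x ∧ GoodM V (L ^ (3 * 13 ^ n)) y ∧
      y ≠ 0 ∧ x = ξ * y) ∨
    ∃ X' : Finset (ZMod p), X'.card = Y.card ^ (n + 1) ∧ ∀ x ∈ X', GoodM V (L ^ (13 ^ n)) x := by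
  induction n with
  | zero => right; exact ⟨Y, by simp, by simpa using hY⟩
  | succ n ih =>
    rcases ih with ih | ⟨X, hXc, hX⟩
    · left
      intro ξ
      obtain ⟨x, y, hx, hy, h⟩ := ih ξ
      have hle : L ^ (3 * 13 ^ n) ≤ L ^ (3 * 13 ^ (n+1)) :=
        pow_le_pow_right₀ hL0 (Nat.mul_le_mul_left _ (Nat.pow_le_pow_right (by norm_num) (by omega)))
      exact ⟨x, y, hx.mono hle, hy.mono hle, h⟩
    · have hle : L ≤ L ^ (13 ^ n) := le_self_pow₀ hL0 (by positivity)
      have hXne : X.Nonempty := by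
        rw [← Finset.card_pos, hXc]; positivity
      rcases pivot_step hV hL0 hVV hle X Y hX (fun y hy => (hY y hy).mono hle) hXne hY2 with h | h
      · left
        intro ξ
        obtain ⟨x, y, hx, hy, h⟩ := h ξ
        have hle : (L ^ (13 ^ n)) ^ 3 ≤ L ^ (3 * 13 ^ (n+1)) := by
          rw [← pow_mul, pow_succ]
          exact pow_le_pow_right₀ hL0 (by nlinarith [pow_pos (show 0 < 13 by norm_num) n])
        exact ⟨x, y, hx.mono hle, hy.mono hle, h⟩
      · right
        obtain ⟨X', h1, h2⟩ := h
        refine ⟨X', by rw [h1, hXc]; ring, fun x hx => (h2 x hx).mono (le_of_eq ?_)⟩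
        rw [← pow_mul, pow_succ]

/-- final counting -/
lemma ratio_count (hVne : V.Nonempty)
    (hVV : ∃ T0 : Finset (ZMod p), (T0.card : ℝ) ≤ L0 ∧ V + V ⊆ T0 + V)
    (h : ∀ ξ : ZMod p, ∃ x y : ZMod p, GoodM V L x ∧ GoodM V L y ∧ y ≠ 0 ∧ x = ξ * y) :
    (p : ℝ) * V.card ≤ L * L * L0 * (p + (V.card : ℝ) ^ 2) := by
  classical
  obtain ⟨T0, hT0, hVV⟩ := hVV
  set M := L * L * L0 with hM
  -- the sumset is small
  have hsmall : ∀ ξ : ZMod p, (((V ×ˢ V).image (fun q => q.1 + ξ * q.2)).card : ℝ) ≤ M * V.card := by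
    intro ξ
    obtain ⟨x, y, ⟨T, hT, hx⟩, ⟨T', hT', hy⟩, hy0, hxy⟩ := h ξ
    have hL : 0 ≤ L := le_trans (by positivity) hT
    have h1 : ((V ×ˢ V).image (fun q => q.1 + ξ * q.2)).card ≤ (T' + T + T0 + V).card := by
      apply Finset.card_le_card_of_injOn (fun z => y * z)
      · intro z hz
        obtain ⟨⟨v, w⟩, hq, rfl⟩ := Finset.mem_image.1 hz
        rw [Finset.mem_product] at hq
        obtain ⟨t, ht, v1, hv1, e1⟩ := hy v hq.1
        obtain ⟨t2, ht2, v2, hv2, e2⟩ := hx w hq.2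
        obtain ⟨t3, ht3, w3, hw3, e3⟩ := Finset.mem_add.1 (hVV (Finset.add_mem_add hv1 hv2))
        have : y * (v + ξ * w) = t + t2 + t3 + w3 := by
          rw [hxy] at e2
          linear_combination e1 + e2 - e3
        simp only [Finset.mem_coe]
        rw [this]
        exact Finset.add_mem_add (Finset.add_mem_add (Finset.add_mem_add ht ht2) ht3) hw3
      · intro a _ b _ hab
        exact mul_left_cancel₀ hy0 hab
    have h2 : (T' + T + T0 + V).card ≤ T'.card * T.card * T0.card * V.card :=
      Finset.card_add_le.trans (Nat.mul_le_mul_right _ (Finset.card_add_le.trans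
        (Nat.mul_le_mul_right _ Finset.card_add_le)))
    have h3 : (((V ×ˢ V).image (fun q => q.1 + ξ * q.2)).card : ℝ) ≤
        T'.card * T.card * T0.card * V.card := by exact_mod_cast h1.trans h2
    refine h3.trans ?_
    gcongr
    rw [hM]
    gcongr
  -- energies
  let E : ZMod p → Finset ((ZMod p × ZMod p) × (ZMod p × ZMod p)) := fun ξ =>
    ((V ×ˢ V) ×ˢ (V ×ˢ V)).filter (fun q => q.1.1 + ξ * q.1.2 = q.2.1 + ξ * q.2.2)
  have hE : ∀ ξ, (V.card : ℝ) ^ 4 ≤ M * V.card * (E ξ).card := by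
    intro ξ
    set I := (V ×ˢ V).image (fun q => q.1 + ξ * q.2) with hI
    have h1 : ((V ×ˢ V).card : ℝ) = ∑ z ∈ I, (((V ×ˢ V).filter (fun q => q.1 + ξ * q.2 = z)).card : ℝ) := by
      rw [Finset.card_eq_sum_card_image (fun q => q.1 + ξ * q.2) (V ×ˢ V)]
      push_cast; rfl
    have h2 : ((E ξ).card : ℝ) = ∑ z ∈ I, (((V ×ˢ V).filter (fun q => q.1 + ξ * q.2 = z)).card : ℝ) ^ 2 := by
      have : (E ξ).card = ∑ z ∈ I, ((V ×ˢ V).filter (fun q => q.1 + ξ * q.2 = z)).card ^ 2 := by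
        rw [Finset.card_eq_sum_card_fiberwise (f := fun q => q.1.1 + ξ * q.1.2) (t := I)]
        · apply Finset.sum_congr rfl
          intro z hz
          rw [sq, ← Finset.card_product]
          congr 1
          ext q
          simp only [E, Finset.mem_filter, Finset.mem_product]
          constructor
          · rintro ⟨⟨⟨h1, h2⟩, h3⟩, h4⟩
            exact ⟨⟨h1, h4⟩, h2, h3 ▸ h4⟩
          · rintro ⟨⟨h1, h4⟩, h2, h3⟩
            exact ⟨⟨⟨h1, h2⟩, h4.trans h3.symm⟩, h4⟩
        · intro q hq
          simp only [E, Finset.coe_filter, Finset.mem_product, Set.mem_ofPred_eq] at hq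
          exact Finset.mem_image_of_mem (fun q : ZMod p × ZMod p => q.1 + ξ * q.2)
            (Finset.mem_product.2 hq.1.1)
      rw [this]; push_cast; rfl
    have h3 := sq_sum_le_card_mul_sum_sq (s := I)
      (f := fun z => (((V ×ˢ V).filter (fun q => q.1 + ξ * q.2 = z)).card : ℝ))
    rw [← h1, ← h2, Finset.card_product] at h3
    push_cast at h3
    calc (V.card : ℝ) ^ 4 = ((V.card : ℝ) * V.card) ^ 2 := by ring
      _ ≤ _ := h3
      _ ≤ _ := by
        have := hsmall ξ
        gcongr
  have hsum : (∑ ξ, ((E ξ).card : ℝ)) ≤ p * (V.card : ℝ) ^ 2 + (V.card : ℝ) ^ 4 := by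
    have h1 : ∀ ξ, (E ξ).card = ∑ q ∈ (V ×ˢ V) ×ˢ (V ×ˢ V), if q.1.1 + ξ * q.1.2 = q.2.1 + ξ * q.2.2 then 1 else 0 := by
      intro ξ; rw [Finset.card_filter]
    have h2 : ∑ ξ, (E ξ).card ≤ ∑ q ∈ (V ×ˢ V) ×ˢ (V ×ˢ V), ((if q.1 = q.2 then p else 0) + 1) := by
      simp_rw [h1]
      rw [Finset.sum_comm]
      apply Finset.sum_le_sum
      intro q _
      rw [← Finset.card_filter]
      split_ifs with hq
      · refine (Finset.card_filter_le _ _).trans ?_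
        rw [Finset.card_univ, ZMod.card]; omega
      · rw [zero_add, Finset.card_le_one]
        intro a ha b hb
        rw [Finset.mem_filter] at ha hb
        have ha := ha.2
        have hb := hb.2
        have : (a - b) * (q.1.2 - q.2.2) = 0 := by linear_combination ha - hb
        rcases mul_eq_zero.1 this with h | h
        · exact sub_eq_zero.1 h
        · exfalso
          apply hq
          have h' := sub_eq_zero.1 h
          rw [h'] at ha
          exact Prod.ext (add_right_cancel ha) h'
    have h3 : ∑ q ∈ (V ×ˢ V) ×ˢ (V ×ˢ V), ((if q.1 = q.2 then p else 0) + 1) = p * V.card ^ 2 + V.card ^ 4 := by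
      rw [Finset.sum_add_distrib, Finset.sum_product]
      congr 1
      · simp only [Finset.sum_ite_eq]
        rw [Finset.sum_ite_mem, Finset.inter_self, Finset.sum_const, Finset.card_product, smul_eq_mul]
        ring
      · simp only [Finset.sum_const, Finset.card_product, smul_eq_mul]; ring
    rw [h3] at h2
    exact_mod_cast h2
  have hVpos : (0 : ℝ) < V.card := by exact_mod_cast hVne.card_pos
  have hM0 : 0 ≤ M := by
    have := (hsmall 0)
    by_contra hcon
    push Not at hcon
    have h3 : M * V.card < 0 := mul_neg_of_neg_of_pos hcon hVpos
    have h4 : (0 : ℝ) ≤ (((V ×ˢ V).image (fun q => q.1 + 0 * q.2)).card : ℝ) := by positivity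
    linarith
  have hfin : (p : ℝ) * (V.card : ℝ) ^ 4 ≤ M * V.card * (p * (V.card : ℝ) ^ 2 + (V.card : ℝ) ^ 4) := by
    calc (p : ℝ) * (V.card : ℝ) ^ 4 = ∑ ξ : ZMod p, (V.card : ℝ) ^ 4 := by
          rw [Finset.sum_const, Finset.card_univ, ZMod.card, nsmul_eq_mul]
      _ ≤ ∑ ξ : ZMod p, M * V.card * (E ξ).card := Finset.sum_le_sum (fun ξ _ => hE ξ)
      _ = M * V.card * ∑ ξ, ((E ξ).card : ℝ) := by rw [Finset.mul_sum]
      _ ≤ _ := by gcongr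
  have h5 : (V.card : ℝ) ^ 3 * (p * V.card) ≤ (V.card : ℝ) ^ 3 * (M * (p + (V.card : ℝ) ^ 2)) := by
    nlinarith [hfin]
  exact le_of_mul_le_mul_left h5 (by positivity)

lemma pivot_main (hV : ∀ v ∈ V, -v ∈ V) (hVne : V.Nonempty) (hL0 : 1 ≤ L)
    (hVV : ∃ T0 : Finset (ZMod p), (T0.card : ℝ) ≤ L ∧ V + V ⊆ T0 + V)
    (Y : Finset (ZMod p)) (hY : ∀ y ∈ Y, GoodM V L y) (hY2 : 1 < Y.card) (n : ℕ)
    (hn : p < Y.card ^ (n + 1)) :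
    (p : ℝ) * V.card ≤ L ^ (13 ^ (n + 1)) * (p + (V.card : ℝ) ^ 2) := by
  rcases pivot_iter hV hL0 hVV Y hY hY2 n with h | ⟨X, hX, -⟩
  · refine (ratio_count hVne hVV h).trans ?_
    gcongr
    rw [← pow_add, ← pow_succ]
    refine pow_le_pow_right₀ hL0 ?_
    rw [pow_succ]
    have := pow_pos (show 0 < 13 by norm_num) n
    omega
  · exfalso
    have := Finset.card_le_univ X
    rw [ZMod.card, hX] at this
    omega
end GoodMult

section BSG
open Finset
open scoped Pointwise

/-- Balog–Szemerédi–Gowers, graph form -/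
lemma bsg {α : Type*} [AddCommGroup α] [DecidableEq α] (A D : Finset α) (r : α → α → Prop)
    [DecidableRel r] (K : ℝ) (hK : 1 ≤ K) (hA : A.Nonempty)
    (hr : ∀ a ∈ A, ∀ b ∈ A, r a b → a - b ∈ D) (hD : (D.card : ℝ) ≤ K * A.card)
    (hG : (A.card : ℝ) ^ 2 ≤ K * ((A ×ˢ A).filter (fun q => r q.1 q.2)).card) :
    ∃ B ⊆ A, (A.card : ℝ) ≤ 4 * K * B.card ∧ ((B - B).card : ℝ) ≤ 4096 * K ^ 10 * B.card := by
  classical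
  have hA0 : (0 : ℝ) < A.card := by exact_mod_cast hA.card_pos
  have hK0 : 0 < K := by linarith
  let N : α → Finset α := fun b => A.filter (fun a => r a b)
  let cn : α → α → Finset α := fun a a' => A.filter (fun b => r a b ∧ r a' b)
  let bad : α → α → Prop := fun a a' => ((cn a a').card : ℝ) < A.card / (16 * K ^ 2)
  have hN : ∑ b ∈ A, ((N b).card : ℝ) = ((A ×ˢ A).filter (fun q => r q.1 q.2)).card := by
    have : ((A ×ˢ A).filter (fun q => r q.1 q.2)).card = ∑ b ∈ A, (N b).card := by
      rw [Finset.card_filter, Finset.sum_product_right]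
      apply Finset.sum_congr rfl
      intro b _
      rw [Finset.card_filter]
    rw [this]; push_cast; rfl
  have hN2 : (A.card : ℝ) ^ 3 ≤ K ^ 2 * ∑ b ∈ A, ((N b).card : ℝ) ^ 2 := by
    have h1 := sq_sum_le_card_mul_sum_sq (s := A) (f := fun b => ((N b).card : ℝ))
    rw [hN] at h1
    set g : ℝ := (((A ×ˢ A).filter (fun q => r q.1 q.2)).card : ℝ)
    have h2 : ((A.card : ℝ) ^ 2) ^ 2 ≤ (K * g) ^ 2 := by gcongr
    have h3 : (A.card : ℝ) * (A.card : ℝ) ^ 3 ≤ A.card * (K ^ 2 * ∑ b ∈ A, ((N b).card : ℝ) ^ 2) := by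
      calc _ = ((A.card : ℝ) ^ 2) ^ 2 := by ring
        _ ≤ (K * g) ^ 2 := h2
        _ = K ^ 2 * g ^ 2 := by ring
        _ ≤ K ^ 2 * (A.card * ∑ b ∈ A, ((N b).card : ℝ) ^ 2) := by gcongr
        _ = _ := by ring
    exact le_of_mul_le_mul_left h3 hA0
  let badp : α → Finset (α × α) := fun b => (N b ×ˢ N b).filter (fun q => bad q.1 q.2)
  have hbad : ∑ b ∈ A, ((badp b).card : ℝ) ≤ (A.card : ℝ) ^ 3 / (16 * K ^ 2) := by
    have h1 : ∑ b ∈ A, (badp b).card = ∑ q ∈ (A ×ˢ A).filter (fun q => bad q.1 q.2), (cn q.1 q.2).card := by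
      have e1 : ∀ b, (badp b).card = ∑ q ∈ (A ×ˢ A).filter (fun q => bad q.1 q.2),
          if (r q.1 b ∧ r q.2 b) then 1 else 0 := by
        intro b
        rw [← Finset.card_filter]
        congr 1
        ext q
        simp only [badp, N, Finset.mem_filter, Finset.mem_product]
        tauto
      simp_rw [e1]
      rw [Finset.sum_comm]
      apply Finset.sum_congr rfl
      intro q _
      rw [← Finset.card_filter]
    have h2 : ∑ b ∈ A, ((badp b).card : ℝ) = ∑ q ∈ (A ×ˢ A).filter (fun q => bad q.1 q.2), ((cn q.1 q.2).card : ℝ) := by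
      exact_mod_cast h1
    rw [h2]
    calc _ ≤ ∑ q ∈ (A ×ˢ A).filter (fun q => bad q.1 q.2), (A.card : ℝ) / (16 * K ^ 2) := by
          apply Finset.sum_le_sum
          intro q hq
          exact (Finset.mem_filter.1 hq).2.le
      _ = (((A ×ˢ A).filter (fun q => bad q.1 q.2)).card : ℝ) * (A.card / (16 * K ^ 2)) := by
          rw [Finset.sum_const, nsmul_eq_mul]
      _ ≤ ((A ×ˢ A).card : ℝ) * (A.card / (16 * K ^ 2)) := by
          gcongr; exact Finset.filter_subset _ _
      _ = _ := by rw [Finset.card_product]; push_cast; ring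
  -- choose b
  have hb : ∃ b ∈ A, (A.card : ℝ) ^ 2 / (2 * K ^ 2) ≤ ((N b).card : ℝ) ^ 2 - 8 * (badp b).card := by
    apply Finset.exists_le_of_sum_le hA
    rw [Finset.sum_sub_distrib, ← Finset.mul_sum, Finset.sum_const, nsmul_eq_mul]
    have h1 : (A.card : ℝ) ^ 3 / K ^ 2 ≤ ∑ b ∈ A, ((N b).card : ℝ) ^ 2 := by
      rw [div_le_iff₀ (by positivity)]; linarith
    have e1 : (A.card : ℝ) * ((A.card : ℝ) ^ 2 / (2 * K ^ 2)) = (A.card : ℝ) ^ 3 / K ^ 2 / 2 := by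
      field_simp
    have e2 : (A.card : ℝ) ^ 3 / (16 * K ^ 2) = (A.card : ℝ) ^ 3 / K ^ 2 / 16 := by
      field_simp
    rw [e2] at hbad
    rw [e1]
    linarith
  obtain ⟨b, hbA, hb⟩ := hb
  set A1 := N b with hA1
  have hA1A : A1 ⊆ A := Finset.filter_subset _ _
  have hA1c : (A.card : ℝ) ≤ 2 * K * A1.card := by
    have h0 : (0 : ℝ) ≤ (badp b).card := by positivity
    have h1 : (A.card : ℝ) ^ 2 / (2 * K ^ 2) ≤ (A1.card : ℝ) ^ 2 := by linarith
    rw [div_le_iff₀ (by positivity)] at h1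
    have h2 : (A.card : ℝ) ^ 2 ≤ (2 * K * A1.card) ^ 2 := by nlinarith [sq_nonneg (K * (A1.card : ℝ))]
    exact le_of_sq_le_sq h2 (by positivity)
  have hA1pos : (0 : ℝ) < A1.card := by
    by_contra hcon
    push Not at hcon
    have : 2 * K * (A1.card : ℝ) ≤ 0 := mul_nonpos_of_nonneg_of_nonpos (by positivity) hcon
    linarith
  have hbadc : 8 * ((badp b).card : ℝ) ≤ (A1.card : ℝ) ^ 2 := by
    have : 0 ≤ (A.card : ℝ) ^ 2 / (2 * K ^ 2) := by positivity
    linarith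
  let bd : α → Finset α := fun a => A1.filter (fun a' => bad a a')
  let B := A1.filter (fun a => 4 * ((bd a).card : ℝ) ≤ A1.card)
  have hbadsum : ∑ a ∈ A1, ((bd a).card : ℝ) = (badp b).card := by
    have : (badp b).card = ∑ a ∈ A1, (bd a).card := by
      rw [Finset.card_filter, Finset.sum_product]
      apply Finset.sum_congr rfl
      intro a _
      rw [Finset.card_filter]
    rw [this]; push_cast; rfl
  have hBc : (A1.card : ℝ) ≤ 2 * B.card := by
    have h1 : (A1.filter (fun a => ¬ 4 * ((bd a).card : ℝ) ≤ A1.card)).card * (A1.card / 4 : ℝ) ≤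
        ∑ a ∈ A1, ((bd a).card : ℝ) := by
      calc _ = ∑ a ∈ A1.filter (fun a => ¬ 4 * ((bd a).card : ℝ) ≤ A1.card), (A1.card / 4 : ℝ) := by
            rw [Finset.sum_const, nsmul_eq_mul]
        _ ≤ ∑ a ∈ A1.filter (fun a => ¬ 4 * ((bd a).card : ℝ) ≤ A1.card), ((bd a).card : ℝ) := by
            apply Finset.sum_le_sum
            intro a ha
            have := (Finset.mem_filter.1 ha).2
            linarith
        _ ≤ _ := Finset.sum_le_sum_of_subset_of_nonneg (Finset.filter_subset _ _)
            (fun _ _ _ => by positivity)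
    rw [hbadsum] at h1
    have h2 : (B.card : ℝ) + (A1.filter (fun a => ¬ 4 * ((bd a).card : ℝ) ≤ A1.card)).card = A1.card := by
      have h := congrArg (Nat.cast : ℕ → ℝ) (Finset.card_filter_add_card_filter_not (s := A1)
        (fun a => 4 * ((bd a).card : ℝ) ≤ A1.card))
      rwa [Nat.cast_add] at h
    nlinarith
  have hBA1 : B ⊆ A1 := Finset.filter_subset _ _
  refine ⟨B, hBA1.trans hA1A, by nlinarith, ?_⟩
  -- representations
  let Q : α → α → Finset (α × α × α) := fun a a' =>
    (A1 ×ˢ A ×ˢ A).filter (fun q => (r a q.2.1 ∧ r q.1 q.2.1) ∧ (r a' q.2.2 ∧ r q.1 q.2.2))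
  have hQ : ∀ a ∈ B, ∀ a' ∈ B, (A.card : ℝ) ^ 3 / (1024 * K ^ 5) ≤ (Q a a').card := by
    intro a ha a' ha'
    have e1 : ((Q a a').card : ℝ) = ∑ x ∈ A1, ((cn a x).card : ℝ) * (cn a' x).card := by
      have : (Q a a').card = ∑ x ∈ A1, (cn a x).card * (cn a' x).card := by
        rw [Finset.card_filter, Finset.sum_product]
        apply Finset.sum_congr rfl
        intro x _
        rw [← Finset.card_filter, ← Finset.card_product]
        congr 1
        ext q
        simp only [cn, Finset.mem_filter, Finset.mem_product]
        tauto
      rw [this]; push_cast; rfl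
    rw [e1]
    let Gd := A1.filter (fun x => ¬ bad a x ∧ ¬ bad a' x)
    have hGd : (A1.card : ℝ) ≤ 2 * Gd.card := by
      have h1 : A1 ⊆ Gd ∪ (bd a ∪ bd a') := by
        intro x hx
        simp only [Gd, bd, Finset.mem_union, Finset.mem_filter]
        tauto
      have h2 := (Finset.card_le_card h1).trans ((Finset.card_union_le _ _).trans
        (Nat.add_le_add_left (Finset.card_union_le _ _) _))
      have h3 : (A1.card : ℝ) ≤ Gd.card + ((bd a).card + (bd a').card) := by exact_mod_cast h2
      have h4 := (Finset.mem_filter.1 ha).2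
      have h5 := (Finset.mem_filter.1 ha').2
      linarith
    calc (A.card : ℝ) ^ 3 / (1024 * K ^ 5)
        = (A.card / (4 * K)) * ((A.card / (16 * K ^ 2)) * (A.card / (16 * K ^ 2))) := by
          field_simp; norm_num
      _ ≤ Gd.card * ((A.card / (16 * K ^ 2)) * (A.card / (16 * K ^ 2))) := by
          gcongr
          rw [div_le_iff₀ (by positivity)]
          nlinarith
      _ = ∑ x ∈ Gd, ((A.card : ℝ) / (16 * K ^ 2)) * (A.card / (16 * K ^ 2)) := by
          rw [Finset.sum_const, nsmul_eq_mul]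
      _ ≤ ∑ x ∈ Gd, ((cn a x).card : ℝ) * (cn a' x).card := by
          apply Finset.sum_le_sum
          intro x hx
          have := (Finset.mem_filter.1 hx).2
          have h1 := not_lt.1 this.1
          have h2 := not_lt.1 this.2
          gcongr
      _ ≤ _ := Finset.sum_le_sum_of_subset_of_nonneg (Finset.filter_subset _ _)
          (fun _ _ _ => by positivity)
  let W : α → Finset (α × α × α × α) := fun d =>
    (D ×ˢ D ×ˢ D ×ˢ D).filter (fun q => q.1 - q.2.1 + q.2.2.1 - q.2.2.2 = d)
  have hW : ∀ d ∈ B - B, (A.card : ℝ) ^ 3 / (1024 * K ^ 5) ≤ (W d).card := by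
    intro d hd
    obtain ⟨a, ha, a', ha', rfl⟩ := Finset.mem_sub.1 hd
    refine (hQ a ha a' ha').trans ?_
    have haA := hA1A (hBA1 ha)
    have haA' := hA1A (hBA1 ha')
    norm_cast
    apply Finset.card_le_card_of_injOn
      (fun q => (a - q.2.1, q.1 - q.2.1, q.1 - q.2.2, a' - q.2.2))
    · rintro ⟨x, y, z⟩ hq
      simp only [Q, Finset.coe_filter, Finset.mem_product, Set.mem_ofPred_eq] at hq
      obtain ⟨⟨hx, hy, hz⟩, ⟨h1, h2⟩, h3, h4⟩ := hq
      simp only [W, Finset.coe_filter, Finset.mem_product, Set.mem_ofPred_eq]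
      have hx := hA1A hx
      exact ⟨⟨hr _ haA _ hy h1, hr _ hx _ hy h2, hr _ hx _ hz h4, hr _ haA' _ hz h3⟩, by abel⟩
    · rintro ⟨x, y, z⟩ _ ⟨x', y', z'⟩ _ he
      simp only [Prod.mk.injEq, sub_right_inj] at he
      obtain ⟨h1, h2, h3, h4⟩ := he
      subst h1 h4
      simpa using h2
  have hWsum : ∑ d ∈ B - B, ((W d).card : ℝ) ≤ (D.card : ℝ) ^ 4 := by
    have h1 : ∑ d ∈ B - B, (W d).card ≤ (D ×ˢ D ×ˢ D ×ˢ D).card := by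
      rw [← Finset.card_biUnion]
      · apply Finset.card_le_card
        intro q hq
        obtain ⟨d, _, hq⟩ := Finset.mem_biUnion.1 hq
        exact (Finset.mem_filter.1 hq).1
      · intro d _ d' _ hne
        rw [Function.onFun, Finset.disjoint_left]
        intro q hq hq'
        exact hne ((Finset.mem_filter.1 hq).2.symm.trans (Finset.mem_filter.1 hq').2)
    simp only [Finset.card_product] at h1
    calc ∑ d ∈ B - B, ((W d).card : ℝ) ≤ (D.card : ℝ) * (D.card * (D.card * D.card)) := by exact_mod_cast h1
      _ = _ := by ring
  have h6 : ((B - B).card : ℝ) * ((A.card : ℝ) ^ 3 / (1024 * K ^ 5)) ≤ (K * A.card) ^ 4 := by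
    calc _ = ∑ d ∈ B - B, (A.card : ℝ) ^ 3 / (1024 * K ^ 5) := by
          rw [Finset.sum_const, nsmul_eq_mul]
      _ ≤ ∑ d ∈ B - B, ((W d).card : ℝ) := Finset.sum_le_sum hW
      _ ≤ (D.card : ℝ) ^ 4 := hWsum
      _ ≤ _ := by gcongr
  have h7 : (A.card : ℝ) ^ 3 * ((B - B).card : ℝ) ≤ (A.card : ℝ) ^ 3 * (1024 * K ^ 9 * A.card) := by
    rw [← mul_div_assoc, div_le_iff₀ (by positivity)] at h6
    nlinarith
  have h8 : ((B - B).card : ℝ) ≤ 1024 * K ^ 9 * A.card := le_of_mul_le_mul_left h7 (by positivity)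
  calc _ ≤ _ := h8
    _ ≤ 1024 * K ^ 9 * (4 * K * B.card) := by
        gcongr; nlinarith
    _ = _ := by ring
end BSG

section SubgroupGrowth
open Finset
open scoped Pointwise

variable {p : ℕ} [Fact p.Prime]

/-- the combinatorial heart of the estimate of sums over subgroups -/
lemma subgroup_growth (H A D : Finset (ZMod p)) (r : ZMod p → ZMod p → Prop)
    [DecidableRel r] (K : ℝ) (hK : 1 ≤ K) (hA : A.Nonempty)
    (hr : ∀ a ∈ A, ∀ b ∈ A, r a b → a - b ∈ D) (hD : (D.card : ℝ) ≤ K * A.card)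
    (hG : (A.card : ℝ) ^ 2 ≤ K * ((A ×ˢ A).filter (fun q => r q.1 q.2)).card)
    (hH0 : ∀ h ∈ H, h ≠ 0) (hHmul : ∀ h ∈ H, ∀ h' ∈ H, h * h' ∈ H) (hHinv : ∀ h ∈ H, h⁻¹ ∈ H)
    (hHne : H.Nonempty)
    (hHA : ∀ h ∈ H, ∀ a ∈ A, h * a ∈ A) (n : ℕ) (hn : (p : ℝ) < (H.card / (8 * K)) ^ (n + 1)) :
    ∃ v : ℝ, A.card ≤ 4 * K * v ∧ v ≤ 4096 * K ^ 10 * A.card ∧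
      (p : ℝ) * v ≤ ((8 * K * (4096 * K ^ 10)) ^ 2 * (4096 * K ^ 10) ^ 5) ^ (13 ^ (n + 1)) *
        (p + v ^ 2) := by
  classical
  obtain ⟨B, hBA, hBc, hBB⟩ := bsg A D r K hK hA hr hD hG
  set K1 : ℝ := 4096 * K ^ 10 with hK1
  have hK1' : 1 ≤ K1 := by
    have : 1 ≤ K ^ 10 := one_le_pow₀ hK
    rw [hK1]; linarith
  have hK0 : 0 < K := by linarith
  have hA0 : (0 : ℝ) < A.card := by exact_mod_cast hA.card_pos
  have hB0 : (0 : ℝ) < B.card := by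
    by_contra hcon
    push Not at hcon
    have : 4 * K * (B.card : ℝ) ≤ 0 := mul_nonpos_of_nonneg_of_nonpos (by positivity) hcon
    linarith
  have hBne : B.Nonempty := by
    rw [← Finset.card_pos]; exact_mod_cast hB0
  have hH0' : (0 : ℝ) < H.card := by exact_mod_cast hHne.card_pos
  set V := B - B with hVdef
  have hVne : V.Nonempty := hBne.sub hBne
  have hVneg : ∀ v ∈ V, -v ∈ V := by
    intro v hv
    obtain ⟨a, ha, b, hb, rfl⟩ := Finset.mem_sub.1 hv
    rw [neg_sub]; exact Finset.sub_mem_sub hb ha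
  have hVV0 : ∃ T0 : Finset (ZMod p), (T0.card : ℝ) ≤ K1 ^ 5 ∧ V + V ⊆ T0 + V := by
    have h1 := pluennecke_ruzsa_inequality_nsmul_sub_nsmul_sub hBne B 3 2
    have h1 := (NNRat.cast_le (K := ℝ)).2 h1
    push_cast at h1
    have h2 : (((V + V) + B).card : ℝ) ≤ K1 ^ 5 * B.card := by
      have e : (V + V) + B = 3 • B - 2 • B := by
        rw [hVdef]
        have e3 : 3 • B = B + B + B := by rw [succ_nsmul, two_nsmul]
        rw [e3, two_nsmul]
        simp only [sub_eq_add_neg, neg_add]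
        ac_rfl
      rw [e]
      refine h1.trans ?_
      gcongr
      rw [div_le_iff₀ hB0]
      exact hBB
    obtain ⟨T, -, hT, hT'⟩ := ruzsa_covering_add hBne h2
    exact ⟨T, hT, hT'⟩
  -- the dilates
  let I : ZMod p → Finset (ZMod p) := fun h => B ∩ B.image (fun b => h * b)
  have hIsum : (H.card : ℝ) * B.card ≤ 4 * K * ∑ h ∈ H, ((I h).card : ℝ) := by
    have h1 : ∀ x ∈ A, True := fun _ _ => trivial
    have e1 : ∑ x ∈ A, (∑ h ∈ H, if x ∈ B.image (fun b => h * b) then (1:ℝ) else 0) = H.card * B.card := by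
      rw [Finset.sum_comm]
      have : ∀ h ∈ H, ∑ x ∈ A, (if x ∈ B.image (fun b => h * b) then (1:ℝ) else 0) = B.card := by
        intro h hh
        rw [Finset.sum_ite_mem, Finset.sum_const, nsmul_eq_mul, mul_one]
        rw [Finset.inter_eq_right.2, Finset.card_image_of_injective]
        · intro a b hab; exact mul_left_cancel₀ (hH0 h hh) hab
        · intro x hx
          obtain ⟨b, hb, rfl⟩ := Finset.mem_image.1 hx
          exact hHA h hh b (hBA hb)
      rw [Finset.sum_congr rfl this, Finset.sum_const, nsmul_eq_mul]
    have e2 : ∑ x ∈ A, (∑ h ∈ H, if x ∈ B.image (fun b => h * b) then (1:ℝ) else 0) ^ 2 ≤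
        H.card * ∑ h ∈ H, ((I h).card : ℝ) := by
      have : ∀ x, (∑ h ∈ H, if x ∈ B.image (fun b => h * b) then (1:ℝ) else 0) ^ 2 =
          ∑ h ∈ H, ∑ h' ∈ H, if x ∈ B.image (fun b => h * b) ∩ B.image (fun b => h' * b) then (1:ℝ) else 0 := by
        intro x
        rw [sq, Finset.sum_mul_sum]
        apply Finset.sum_congr rfl; intro h _
        apply Finset.sum_congr rfl; intro h' _
        simp only [Finset.mem_inter]
        split_ifs <;> simp_all
      simp_rw [this]
      rw [Finset.sum_comm]
      rw [← nsmul_eq_mul, ← Finset.sum_const]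
      apply Finset.sum_le_sum
      intro h hh
      rw [Finset.sum_comm]
      have : ∑ h' ∈ H, ((I h').card : ℝ) = ∑ h' ∈ H, ((I (h⁻¹ * h')).card : ℝ) := by
        symm
        apply Finset.sum_bij' (fun h' _ => h⁻¹ * h') (fun h' _ => h * h')
        · intro a ha; exact hHmul _ (hHinv _ hh) _ ha
        · intro a ha; exact hHmul _ hh _ ha
        · intro a _; exact mul_inv_cancel_left₀ (hH0 h hh) a
        · intro a _; exact inv_mul_cancel_left₀ (hH0 h hh) a
        · intro a _; rfl
      rw [this]
      apply Finset.sum_le_sum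
      intro h' hh'
      rw [Finset.sum_ite_mem, Finset.sum_const, nsmul_eq_mul, mul_one]
      norm_cast
      apply Finset.card_le_card_of_injOn (fun x => h⁻¹ * x)
      · intro x hx
        have hx := (Finset.mem_inter.1 (Finset.mem_coe.1 hx)).2
        rw [Finset.mem_inter] at hx
        obtain ⟨b, hb, rfl⟩ := Finset.mem_image.1 hx.1
        obtain ⟨b', hb', e⟩ := Finset.mem_image.1 hx.2
        simp only [I, Finset.coe_inter, Set.mem_inter_iff, Finset.mem_coe, Finset.mem_image]
        refine ⟨by rwa [inv_mul_cancel_left₀ (hH0 h hh)], b', hb', ?_⟩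
        rw [mul_assoc, e]
      · intro a _ b _ hab
        exact mul_left_cancel₀ (inv_ne_zero (hH0 h hh)) hab
    have e3 := sq_sum_le_card_mul_sum_sq (s := A)
      (f := fun x => ∑ h ∈ H, if x ∈ B.image (fun b => h * b) then (1:ℝ) else 0)
    rw [e1] at e3
    set S1 := ∑ h ∈ H, ((I h).card : ℝ) with hS1
    have hS0 : 0 ≤ S1 := Finset.sum_nonneg (fun _ _ => by positivity)
    have e4 : ((H.card : ℝ) * B.card) ^ 2 ≤ (4 * K * B.card) * (H.card * S1) := by
      refine e3.trans ?_
      gcongr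
    have e5 : ((H.card : ℝ) * B.card) * ((H.card : ℝ) * B.card) ≤ ((H.card : ℝ) * B.card) * (4 * K * S1) := by
      nlinarith
    exact le_of_mul_le_mul_left e5 (by positivity)
  let Y := H.filter (fun h => (B.card : ℝ) ≤ 8 * K * (I h).card)
  have hYc : (H.card : ℝ) ≤ 8 * K * Y.card := by
    have h1 : ∑ h ∈ H, ((I h).card : ℝ) ≤ Y.card * B.card + H.card * (B.card / (8 * K)) := by
      rw [← Finset.sum_filter_add_sum_filter_not H (fun h => (B.card : ℝ) ≤ 8 * K * (I h).card)]
      apply add_le_add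
      · rw [← nsmul_eq_mul, ← Finset.sum_const]
        apply Finset.sum_le_sum
        intro h _
        exact_mod_cast Finset.card_le_card Finset.inter_subset_left
      · calc _ ≤ ∑ h ∈ H.filter (fun h => ¬ (B.card : ℝ) ≤ 8 * K * (I h).card), (B.card : ℝ) / (8 * K) := by
              apply Finset.sum_le_sum
              intro h hh
              have := (Finset.mem_filter.1 hh).2
              push Not at this
              rw [le_div_iff₀ (by positivity)]
              linarith
          _ ≤ _ := by
              rw [Finset.sum_const, nsmul_eq_mul]
              gcongr
              exact Finset.filter_subset _ _
    have h2 : (H.card : ℝ) * B.card ≤ 4 * K * (Y.card * B.card + H.card * (B.card / (8 * K))) :=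
      hIsum.trans (by gcongr)
    have h3 : 4 * K * (Y.card * B.card + H.card * (B.card / (8 * K))) =
        4 * K * Y.card * B.card + H.card * B.card / 2 := by
      field_simp; ring
    rw [h3] at h2
    have h4 : B.card * (H.card : ℝ) ≤ B.card * (8 * K * Y.card) := by nlinarith
    exact le_of_mul_le_mul_left h4 hB0
  set L : ℝ := (8 * K * K1) ^ 2 * K1 ^ 5 with hL
  have hKK : 1 ≤ 8 * K * K1 := by nlinarith
  have hL1 : 1 ≤ L := by
    rw [hL]; exact one_le_mul_of_one_le_of_one_le (one_le_pow₀ hKK) (one_le_pow₀ hK1')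
  have hKL : K1 ^ 5 ≤ L := by
    rw [hL]; exact le_mul_of_one_le_left (by positivity) (one_le_pow₀ hKK)
  have hYgood : ∀ y ∈ Y, GoodM V L y := by
    intro y hy
    obtain ⟨hyH, hyI⟩ := Finset.mem_filter.1 hy
    have hIpos : (0 : ℝ) < (I y).card := by
      by_contra hcon
      push Not at hcon
      have : 8 * K * ((I y).card : ℝ) ≤ 0 := mul_nonpos_of_nonneg_of_nonpos (by positivity) hcon
      linarith
    have hIne : (I y).Nonempty := by rw [← Finset.card_pos]; exact_mod_cast hIpos
    set yB := B.image (fun b => y * b) with hyB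
    set J := (I y).image (fun b => -b) with hJ
    have hJc : J.card = (I y).card := Finset.card_image_of_injective _ neg_injective
    have h1 : ((yB + J).card : ℝ) ≤ (8 * K * K1) * J.card := by
      have h2 : yB + J ⊆ V.image (fun b => y * b) := by
        intro z hz
        obtain ⟨a, ha, b, hb, rfl⟩ := Finset.mem_add.1 hz
        obtain ⟨a', ha', rfl⟩ := Finset.mem_image.1 ha
        obtain ⟨b', hb', rfl⟩ := Finset.mem_image.1 hb
        obtain ⟨c, hc, rfl⟩ := Finset.mem_image.1 (Finset.mem_inter.1 hb').2
        refine Finset.mem_image.2 ⟨a' - c, Finset.sub_mem_sub ha' hc, by ring⟩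
      have h3 : ((yB + J).card : ℝ) ≤ V.card := by
        exact_mod_cast (Finset.card_le_card h2).trans Finset.card_image_le
      rw [hJc]
      calc _ ≤ _ := h3
        _ ≤ K1 * B.card := hBB
        _ ≤ K1 * (8 * K * (I y).card) := by gcongr
        _ = _ := by ring
    obtain ⟨T, -, hT, hT'⟩ := ruzsa_covering_add (hIne.image _) h1
    have hJV : J - J ⊆ V := by
      intro z hz
      obtain ⟨a, ha, b, hb, rfl⟩ := Finset.mem_sub.1 hz
      obtain ⟨a', ha', rfl⟩ := Finset.mem_image.1 ha
      obtain ⟨b', hb', rfl⟩ := Finset.mem_image.1 hb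
      have : -a' - -b' = b' - a' := by ring
      rw [this]
      exact Finset.sub_mem_sub (Finset.mem_inter.1 hb').1 (Finset.mem_inter.1 ha').1
    obtain ⟨T0, hT0, hVV⟩ := hVV0
    refine ⟨T - T + T0, ?_, ?_⟩
    · have h4 : ((T - T + T0).card : ℝ) ≤ T.card * T.card * T0.card := by
        exact_mod_cast (Finset.card_add_le (s := T - T) (t := T0)).trans
          (Nat.mul_le_mul_right _ (Finset.card_sub_le (s := T) (t := T)))
      refine h4.trans ?_
      rw [hL, sq]
      gcongr
    · intro v hv
      obtain ⟨a, ha, b, hb, rfl⟩ := Finset.mem_sub.1 hv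
      obtain ⟨t, ht, w, hw, e⟩ := Finset.mem_add.1 (hT' (Finset.mem_image_of_mem _ ha))
      obtain ⟨t', ht', w', hw', e'⟩ := Finset.mem_add.1 (hT' (Finset.mem_image_of_mem _ hb))
      obtain ⟨t3, ht3, w3, hw3, e3⟩ := Finset.mem_add.1
        (hVV (Finset.add_mem_add (hJV hw) (hVneg _ (hJV hw'))))
      refine ⟨t - t' + t3, Finset.add_mem_add (Finset.sub_mem_sub ht ht') ht3, w3, hw3, ?_⟩
      linear_combination -e + e' - e3
  have hYn : (p : ℝ) < (Y.card : ℝ) ^ (n + 1) := by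
    refine hn.trans_le ?_
    gcongr
    rw [div_le_iff₀ (by positivity)]
    linarith
  have hY2 : 1 < Y.card := by
    by_contra hcon
    push Not at hcon
    have h1 : (Y.card : ℝ) ^ (n + 1) ≤ 1 := pow_le_one₀ (by positivity) (by exact_mod_cast hcon)
    have h2 : (1 : ℝ) ≤ p := by exact_mod_cast (Fact.out : p.Prime).one_lt.le
    linarith
  have hfin := pivot_main hVneg hVne hL1
    (by obtain ⟨T0, h1, h2⟩ := hVV0; exact ⟨T0, h1.trans hKL, h2⟩) Y hYgood hY2 n
    (by exact_mod_cast hYn)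
  refine ⟨V.card, ?_, ?_, hfin⟩
  · refine hBc.trans ?_
    have h9 : (B.card : ℝ) ≤ V.card := by
      exact_mod_cast (Finset.card_le_card_sub_right hBne : B.card ≤ (B - B).card)
    exact mul_le_mul_of_nonneg_left h9 (by positivity)
  · refine hBB.trans ?_
    gcongr
end SubgroupGrowth

section SubgroupSums
open Finset

variable {p : ℕ} [Fact p.Prime]

local notation "χ" => (ZMod.stdAddChar : AddChar (ZMod _) ℂ)

lemma chi_norm (x : ZMod p) : ‖χ x‖ = 1 := by
  rw [ZMod.stdAddChar_apply]; exact Circle.norm_coe _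

lemma chi_conj (x : ZMod p) : (starRingEnd ℂ) (χ x) = χ (-x) := by
  rw [AddChar.map_neg_eq_inv, Complex.inv_def, Complex.normSq_eq_norm_sq, chi_norm]; simp

lemma chi_sum (b : ZMod p) : ∑ x : ZMod p, χ (x * b) = if b = 0 then (p : ℂ) else 0 := by
  rw [AddChar.sum_mulShift b (ZMod.isPrimitive_stdAddChar p), ZMod.card]
  split_ifs <;> simp

/-- the sum over `H` -/
noncomputable def subS (H : Finset (ZMod p)) (a : ZMod p) : ℂ := ∑ h ∈ H, χ (a * h)

lemma subS_parseval (H : Finset (ZMod p)) : ∑ a, ‖subS H a‖ ^ 2 = p * H.card := by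
  have h1 : ∀ a, ((‖subS H a‖ ^ 2 : ℝ) : ℂ) = ∑ h ∈ H, ∑ h' ∈ H, χ (a * (h - h')) := by
    intro a
    push_cast
    rw [← Complex.mul_conj', subS, map_sum, Finset.sum_mul_sum]
    apply Finset.sum_congr rfl; intro h _
    apply Finset.sum_congr rfl; intro h' _
    rw [chi_conj, ← AddChar.map_add_eq_mul]
    congr 1; ring
  have h2 : ((∑ a, ‖subS H a‖ ^ 2 : ℝ) : ℂ) = p * H.card := by
    rw [Complex.ofReal_sum]
    simp_rw [h1]
    rw [Finset.sum_comm]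
    have : ∀ h ∈ H, ∑ a : ZMod p, ∑ h' ∈ H, χ (a * (h - h')) = (p : ℂ) := by
      intro h hh
      rw [Finset.sum_comm]
      simp_rw [chi_sum, sub_eq_zero]
      rw [Finset.sum_ite_eq]; simp [hh]
    rw [Finset.sum_congr rfl this, Finset.sum_const, nsmul_eq_mul, mul_comm]
  exact_mod_cast h2

lemma subS_spec (H A : Finset (ZMod p)) :
    (∑ a ∈ A, ‖subS H a‖) ^ 2 ≤ H.card * ∑ a ∈ A, ∑ b ∈ A, ‖subS H (a - b)‖ := by
  have hc : ∀ z : ℂ, ∃ c : ℂ, ‖c‖ ≤ 1 ∧ c * z = ‖z‖ := by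
    intro z
    by_cases hz : z = 0
    · exact ⟨0, by simp, by simp [hz]⟩
    · refine ⟨(starRingEnd ℂ) z / ‖z‖, ?_, ?_⟩
      · rw [norm_div, RCLike.norm_conj, Complex.norm_real, norm_norm]
        exact div_self_le_one _
      · have : (‖z‖ : ℂ) ≠ 0 := by simpa using hz
        rw [div_mul_eq_mul_div, Complex.conj_mul', sq, mul_div_assoc, div_self this, mul_one]
  choose c hc1 hc2 using hc
  let d : ZMod p → ℂ := fun a => c (subS H a)
  let f : ZMod p → ℂ := fun h => ∑ a ∈ A, d a * χ (a * h)
  have h1 : ((∑ a ∈ A, ‖subS H a‖ : ℝ) : ℂ) = ∑ h ∈ H, f h := by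
    push_cast
    rw [Finset.sum_comm]
    apply Finset.sum_congr rfl; intro a _
    rw [← hc2 (subS H a), ← Finset.mul_sum]; rfl
  have h2 : (∑ a ∈ A, ‖subS H a‖) ≤ ∑ h ∈ H, ‖f h‖ := by
    have h0 : 0 ≤ ∑ a ∈ A, ‖subS H a‖ := Finset.sum_nonneg (fun _ _ => norm_nonneg _)
    have := norm_sum_le H f
    rwa [← h1, Complex.norm_real, Real.norm_of_nonneg h0] at this
  have h3 : ∑ h ∈ H, ‖f h‖ ^ 2 ≤ ∑ a ∈ A, ∑ b ∈ A, ‖subS H (a - b)‖ := by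
    have e1 : ((∑ h ∈ H, ‖f h‖ ^ 2 : ℝ) : ℂ) =
        ∑ a ∈ A, ∑ b ∈ A, d a * (starRingEnd ℂ) (d b) * subS H (a - b) := by
      rw [Complex.ofReal_sum]
      have : ∀ h, ((‖f h‖ ^ 2 : ℝ) : ℂ) = ∑ a ∈ A, ∑ b ∈ A, d a * (starRingEnd ℂ) (d b) * χ ((a - b) * h) := by
        intro h
        push_cast
        rw [← Complex.mul_conj', map_sum, Finset.sum_mul_sum]
        apply Finset.sum_congr rfl; intro a _
        apply Finset.sum_congr rfl; intro b _
        rw [map_mul (starRingEnd ℂ), chi_conj, sub_mul, sub_eq_add_neg, AddChar.map_add_eq_mul]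
        ring
      simp_rw [this]
      rw [Finset.sum_comm]
      apply Finset.sum_congr rfl; intro a _
      rw [Finset.sum_comm]
      apply Finset.sum_congr rfl; intro b _
      rw [← Finset.mul_sum]; rfl
    have e2 : ‖((∑ h ∈ H, ‖f h‖ ^ 2 : ℝ) : ℂ)‖ ≤ ∑ a ∈ A, ∑ b ∈ A, ‖subS H (a - b)‖ := by
      rw [e1]
      refine (norm_sum_le _ _).trans (Finset.sum_le_sum fun a _ => (norm_sum_le _ _).trans
        (Finset.sum_le_sum fun b _ => ?_))
      rw [norm_mul, norm_mul, RCLike.norm_conj]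
      exact mul_le_of_le_one_left (norm_nonneg _) (mul_le_one₀ (hc1 _) (norm_nonneg _) (hc1 _))
    rwa [Complex.norm_real, Real.norm_of_nonneg (Finset.sum_nonneg fun _ _ => by positivity)] at e2
  calc _ ≤ (∑ h ∈ H, ‖f h‖) ^ 2 := by
        gcongr
    _ ≤ H.card * ∑ h ∈ H, ‖f h‖ ^ 2 := sq_sum_le_card_mul_sum_sq
    _ ≤ _ := by gcongr

lemma pigeon_growth (f : ℕ → ℝ) (K P : ℝ) (hK : 0 ≤ K) (J : ℕ) (h0 : 1 ≤ f 0) (hP : ∀ j, f j ≤ P)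
    (hJ : P < K ^ J) : ∃ j < J, f (j + 1) ≤ K * f j := by
  by_contra hcon
  push Not at hcon
  have : ∀ j ≤ J, K ^ j ≤ f j := by
    intro j
    induction j with
    | zero => intro _; simpa using h0
    | succ j ih =>
      intro hj
      have := ih (by omega)
      refine le_trans ?_ (hcon j (by omega)).le
      rw [pow_succ, mul_comm]; gcongr
  linarith [this J le_rfl, hP J]

lemma bgk_core (H : Finset (ZMod p)) (hH0 : ∀ h ∈ H, h ≠ 0)
    (hHmul : ∀ h ∈ H, ∀ h' ∈ H, h * h' ∈ H) (hHinv : ∀ h ∈ H, h⁻¹ ∈ H) (hHne : H.Nonempty)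
    (q K : ℝ) (hq : 2 ≤ q) (J n M : ℕ) (hK : K = q ^ (4 * 3 ^ J)) (hKJ : (p : ℝ) < K ^ J)
    (hM : M = 162 * 13 ^ (n + 1) + 25) (hH : K ^ M ≤ H.card)
    (hn : (p : ℝ) < (K ^ (M - 4)) ^ (n + 1)) (a₀ : ZMod p) (ha₀ : a₀ ≠ 0) :
    ‖subS H a₀‖ ≤ H.card / q := by
  classical
  by_contra hcon
  push Not at hcon
  have hq0 : 0 < q := by linarith
  have hq1 : 1 ≤ q := by linarith
  have hHc : (0 : ℝ) < H.card := by exact_mod_cast hHne.card_pos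
  have hqK : q ≤ K := by
    rw [hK]; exact le_self_pow₀ hq1 (by positivity)
  have hK2 : 2 ≤ K := hq.trans hqK
  have hK1 : 1 ≤ K := by linarith
  have hK0 : 0 < K := by linarith
  let Λ : ℕ → Finset (ZMod p) := fun j => univ.filter (fun a => (H.card : ℝ) ≤ q ^ (3 ^ j) * ‖subS H a‖)
  have ha₀Λ : a₀ ∈ Λ 0 := by
    simp only [Λ, Finset.mem_filter, Finset.mem_univ, true_and, pow_zero, pow_one]
    rw [div_lt_iff₀ hq0] at hcon
    linarith
  have hmono : ∀ j, Λ 0 ⊆ Λ j := by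
    intro j a ha
    simp only [Λ, Finset.mem_filter, Finset.mem_univ, true_and, pow_zero, pow_one] at ha ⊢
    refine ha.trans ?_
    gcongr
    exact le_self_pow₀ hq1 (by positivity)
  obtain ⟨j, hjJ, hj⟩ := pigeon_growth (fun j => ((Λ j).card : ℝ)) K p hK0.le J
    (by
      have : 1 ≤ (Λ 0).card := Finset.card_pos.2 ⟨a₀, ha₀Λ⟩
      exact_mod_cast this)
    (by
      intro j
      have : (Λ j).card ≤ p := (Finset.card_le_univ _).trans (by rw [ZMod.card])
      exact_mod_cast this) hKJ
  set A := Λ j with hAdef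
  set e := 3 ^ j with he
  have he1 : 1 ≤ e := Nat.one_le_pow _ _ (by norm_num)
  have heJ : 3 * e ≤ 3 ^ J := by
    rw [he, mul_comm, ← pow_succ]; exact Nat.pow_le_pow_right (by norm_num) hjJ
  have hqe : 0 < q ^ e := by positivity
  have haA : a₀ ∈ A := hmono j ha₀Λ
  have hAne : A.Nonempty := ⟨a₀, haA⟩
  have hA0 : (0 : ℝ) < A.card := by exact_mod_cast hAne.card_pos
  have hmemA : ∀ a ∈ A, (H.card : ℝ) / q ^ e ≤ ‖subS H a‖ := by
    intro a ha
    have := (Finset.mem_filter.1 ha).2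
    rw [div_le_iff₀ hqe]; linarith
  have hSinv : ∀ h ∈ H, ∀ a, subS H (h * a) = subS H a := by
    intro h hh a
    unfold subS
    apply Finset.sum_bij' (fun x _ => h * x) (fun x _ => h⁻¹ * x)
    · intro x hx; exact hHmul _ hh _ hx
    · intro x hx; exact hHmul _ (hHinv _ hh) _ hx
    · intro x _; exact inv_mul_cancel_left₀ (hH0 h hh) x
    · intro x _; exact mul_inv_cancel_left₀ (hH0 h hh) x
    · intro x _; congr 1; ring
  have hHA : ∀ h ∈ H, ∀ a ∈ A, h * a ∈ A := by
    intro h hh a ha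
    simp only [A, Λ, Finset.mem_filter, Finset.mem_univ, true_and] at ha ⊢
    rwa [hSinv h hh]
  -- size of A
  have hAle : (A.card : ℝ) * H.card ≤ K * p := by
    have h1 : (A.card : ℝ) * (H.card / q ^ e) ^ 2 ≤ p * H.card := by
      rw [← subS_parseval H, ← nsmul_eq_mul, ← Finset.sum_const]
      calc _ ≤ ∑ a ∈ A, ‖subS H a‖ ^ 2 := by
            apply Finset.sum_le_sum
            intro a ha
            have := hmemA a ha
            gcongr
        _ ≤ _ := Finset.sum_le_sum_of_subset_of_nonneg (Finset.subset_univ _)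
            (fun _ _ _ => by positivity)
    have h2 : (A.card : ℝ) * (H.card : ℝ) ^ 2 ≤ p * H.card * (q ^ e) ^ 2 := by
      rw [div_pow, ← mul_div_assoc, div_le_iff₀ (by positivity)] at h1
      exact h1
    have h3 : (q ^ e) ^ 2 ≤ K := by
      rw [hK, ← pow_mul]
      exact pow_le_pow_right₀ hq1 (by omega)
    have h4 : (H.card : ℝ) * (A.card * H.card) ≤ H.card * (K * p) := by
      calc _ = (A.card : ℝ) * (H.card : ℝ) ^ 2 := by ring
        _ ≤ p * H.card * (q ^ e) ^ 2 := h2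
        _ ≤ p * H.card * K := by gcongr
        _ = _ := by ring
    exact le_of_mul_le_mul_left h4 hHc
  have hHleA : (H.card : ℝ) ≤ A.card := by
    have : H.card ≤ A.card := by
      apply Finset.card_le_card_of_injOn (fun h => h * a₀)
      · intro h hh; exact hHA h hh a₀ haA
      · intro x _ y _ hxy; exact mul_right_cancel₀ ha₀ hxy
    exact_mod_cast this
  -- graph
  let r : ZMod p → ZMod p → Prop := fun a b => a - b ∈ Λ (j + 1)
  have hG : (A.card : ℝ) ^ 2 ≤ K * ((A ×ˢ A).filter (fun q => r q.1 q.2)).card := by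
    set g : ℝ := (((A ×ˢ A).filter (fun q => r q.1 q.2)).card : ℝ) with hg
    have h1 := subS_spec H A
    have h2 : (A.card : ℝ) * (H.card / q ^ e) ≤ ∑ a ∈ A, ‖subS H a‖ := by
      rw [← nsmul_eq_mul, ← Finset.sum_const]
      exact Finset.sum_le_sum hmemA
    have hSle : ∀ a, ‖subS H a‖ ≤ H.card := by
      intro a
      refine (norm_sum_le _ _).trans ?_
      simp [chi_norm]
    have h3 : ∑ a ∈ A, ∑ b ∈ A, ‖subS H (a - b)‖ ≤ g * H.card + (A.card : ℝ) ^ 2 * (H.card / q ^ (3 * e)) := by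
      rw [← Finset.sum_product', ← Finset.sum_filter_add_sum_filter_not (A ×ˢ A) (fun q => r q.1 q.2)]
      apply add_le_add
      · rw [hg, ← nsmul_eq_mul, ← Finset.sum_const]
        exact Finset.sum_le_sum (fun _ _ => hSle _)
      · calc _ ≤ ∑ x ∈ (A ×ˢ A).filter (fun q => ¬ r q.1 q.2), (H.card : ℝ) / q ^ (3 * e) := by
              apply Finset.sum_le_sum
              intro x hx
              have := (Finset.mem_filter.1 hx).2
              simp only [r, Λ, Finset.mem_filter, Finset.mem_univ, true_and, not_le] at this
              rw [le_div_iff₀ (by positivity), he, mul_comm 3, ← pow_succ]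
              linarith
          _ ≤ _ := by
              rw [Finset.sum_const, nsmul_eq_mul, sq]
              have : (((A ×ˢ A).filter (fun q => ¬ r q.1 q.2)).card : ℝ) ≤ A.card * A.card := by
                have := Finset.card_filter_le (A ×ˢ A) (fun q => ¬ r q.1 q.2)
                rw [Finset.card_product] at this
                exact_mod_cast this
              gcongr
    have h4 : ((A.card : ℝ) * (H.card / q ^ e)) ^ 2 ≤
        H.card * (g * H.card + (A.card : ℝ) ^ 2 * (H.card / q ^ (3 * e))) := by
      calc _ ≤ (∑ a ∈ A, ‖subS H a‖) ^ 2 := by gcongr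
        _ ≤ _ := h1
        _ ≤ _ := by gcongr
    set x := q ^ e with hx
    have hx2 : 2 ≤ x := hq.trans (le_self_pow₀ hq1 (by omega))
    have hx3 : q ^ (3 * e) = x ^ 3 := by rw [hx, ← pow_mul, mul_comm]
    rw [hx3] at h4
    have h5 : (A.card : ℝ) ^ 2 / x ^ 2 ≤ g + (A.card : ℝ) ^ 2 / x ^ 3 := by
      have e1 : ((A.card : ℝ) * (H.card / x)) ^ 2 = (H.card : ℝ) ^ 2 * ((A.card : ℝ) ^ 2 / x ^ 2) := by
        field_simp
      have e2 : H.card * (g * H.card + (A.card : ℝ) ^ 2 * (H.card / x ^ 3)) =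
          (H.card : ℝ) ^ 2 * (g + (A.card : ℝ) ^ 2 / x ^ 3) := by ring
      rw [e1, e2] at h4
      exact le_of_mul_le_mul_left h4 (by positivity)
    have h6 : (A.card : ℝ) ^ 2 / x ^ 3 ≤ (A.card : ℝ) ^ 2 / x ^ 2 / 2 := by
      rw [div_div]
      apply div_le_div_of_nonneg_left (by positivity) (by positivity)
      rw [pow_succ x 2]; gcongr
    have h7 : (A.card : ℝ) ^ 2 ≤ g * (2 * x ^ 2) := by
      have : (A.card : ℝ) ^ 2 / x ^ 2 / 2 ≤ g := by linarith
      rw [div_div, div_le_iff₀ (by positivity)] at this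
      linarith
    have h8 : 2 * x ^ 2 ≤ K := by
      calc 2 * x ^ 2 ≤ x * x ^ 2 := by gcongr
        _ = q ^ (3 * e) := by rw [hx3]; ring
        _ ≤ K := by rw [hK]; exact pow_le_pow_right₀ hq1 (by omega)
    calc _ ≤ _ := h7
      _ ≤ g * K := by gcongr
      _ = _ := by ring
  have hM25 : 25 ≤ M := by omega
  obtain ⟨v, hv1, hv2, hv3⟩ := subgroup_growth H A (Λ (j + 1)) r K hK1 hAne
    (fun a _ b _ h => h) hj hG hH0 hHmul hHinv hHne hHA n (by
      refine hn.trans_le ?_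
      gcongr
      rw [le_div_iff₀ (by positivity)]
      calc K ^ (M - 4) * (8 * K) = K ^ (M - 4) * (2 ^ 3 * K) := by norm_num
        _ ≤ K ^ (M - 4) * (K ^ 3 * K) := by gcongr
        _ = K ^ M := by rw [← pow_succ, ← pow_add]; congr 1; omega
        _ ≤ _ := hH)
  have hb22 : 4096 * K ^ 10 ≤ K ^ 22 := by
    calc 4096 * K ^ 10 = 2 ^ 12 * K ^ 10 := by norm_num
      _ ≤ K ^ 12 * K ^ 10 := by gcongr
      _ = _ := by ring
  have hLb : ((8 * K * (4096 * K ^ 10)) ^ 2 * (4096 * K ^ 10) ^ 5) ≤ K ^ 162 := by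
    calc _ = 2 ^ 90 * K ^ 72 := by ring
      _ ≤ K ^ 90 * K ^ 72 := by gcongr
      _ = _ := by ring
  set E := 13 ^ (n + 1) with hE
  have hv3' : (p : ℝ) * v ≤ K ^ (162 * E) * (p + v ^ 2) := by
    refine hv3.trans ?_
    rw [pow_mul]
    gcongr
  have hv1' : (H.card : ℝ) ≤ K ^ 3 * v := by
    have hv0 : 0 < v := by
      by_contra hc
      push Not at hc
      have : 4 * K * v ≤ 0 := mul_nonpos_of_nonneg_of_nonpos (by positivity) hc
      linarith
    calc _ ≤ (A.card : ℝ) := hHleA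
      _ ≤ 4 * K * v := hv1
      _ = 2 ^ 2 * K * v := by norm_num
      _ ≤ K ^ 2 * K * v := by gcongr
      _ = _ := by ring
  have hv0 : 0 < v := by
    by_contra hc
    push Not at hc
    have : K ^ 3 * v ≤ 0 := mul_nonpos_of_nonneg_of_nonpos (by positivity) hc
    linarith
  have hv2' : v * H.card ≤ K ^ 23 * p := by
    calc v * H.card ≤ (4096 * K ^ 10 * A.card) * H.card := by gcongr
      _ ≤ (K ^ 22 * A.card) * H.card := by gcongr
      _ = K ^ 22 * (A.card * H.card) := by ring
      _ ≤ K ^ 22 * (K * p) := by gcongr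
      _ = _ := by ring
  have hp0 : (0 : ℝ) < p := by exact_mod_cast (Fact.out : p.Prime).pos
  -- multiply by |H|
  have h9 : (p * v) * H.card ≤ (p * v) * (K ^ (162 * E) * (K ^ 3 + K ^ 23)) := by
    calc (p * v) * H.card ≤ K ^ (162 * E) * (p + v ^ 2) * H.card := by gcongr
      _ = K ^ (162 * E) * (p * H.card + v * (v * H.card)) := by ring
      _ ≤ K ^ (162 * E) * (p * (K ^ 3 * v) + v * (K ^ 23 * p)) := by gcongr
      _ = _ := by ring
  have h10 : (H.card : ℝ) ≤ K ^ (162 * E) * (K ^ 3 + K ^ 23) := le_of_mul_le_mul_left h9 (by positivity)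
  have h11 : K ^ (162 * E) * (K ^ 3 + K ^ 23) < K ^ M := by
    have : K ^ 3 < K ^ 23 := pow_lt_pow_right₀ (by linarith) (by norm_num)
    calc _ < K ^ (162 * E) * (K ^ 23 + K ^ 23) := by gcongr
      _ = K ^ (162 * E) * (2 * K ^ 23) := by ring
      _ ≤ K ^ (162 * E) * (K ^ 2 * K ^ 23) := by
        gcongr; nlinarith
      _ = K ^ M := by rw [hM, pow_add]; ring
  linarith

/-- Bourgain–Glibichuk–Konyagin bound for subgroups. -/
theorem bgk (ε : ℝ) (hε : 0 < ε) : ∃ γ : ℝ, 0 < γ ∧ ∃ P₀ : ℝ, ∀ (p : ℕ) [Fact p.Prime], P₀ ≤ p →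
    ∀ H : Finset (ZMod p), (∀ h ∈ H, h ≠ 0) → (∀ h ∈ H, ∀ h' ∈ H, h * h' ∈ H) →
    (∀ h ∈ H, h⁻¹ ∈ H) → H.Nonempty → (p : ℝ) ^ ε ≤ H.card → ∀ a : ZMod p, a ≠ 0 →
    ‖∑ h ∈ H, χ (a * h)‖ ≤ H.card * (p : ℝ) ^ (-γ) := by
  obtain ⟨n, hn⟩ := exists_nat_gt (2 / ε)
  set M : ℕ := 162 * 13 ^ (n + 1) + 25 with hM
  have hM0 : (0 : ℝ) < M := by rw [hM]; positivity
  set κ : ℝ := ε / M with hκ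
  have hκ0 : 0 < κ := by positivity
  obtain ⟨J, hJ⟩ := exists_nat_gt (1 / κ)
  set γ : ℝ := κ / ((4 * 3 ^ J : ℕ) : ℝ) with hγ
  have hγ0 : 0 < γ := by positivity
  refine ⟨γ, hγ0, (2 : ℝ) ^ (1 / γ), ?_⟩
  intro p _ hp H h1 h2 h3 h4 hH a ha
  have hp1 : (1 : ℝ) < p := by exact_mod_cast (Fact.out : p.Prime).one_lt
  have hp0 : (0 : ℝ) < p := by linarith
  have hq : 2 ≤ (p : ℝ) ^ γ := by
    calc (2 : ℝ) = ((2 : ℝ) ^ (1 / γ)) ^ γ := by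
          rw [← Real.rpow_mul (by norm_num), one_div_mul_cancel hγ0.ne', Real.rpow_one]
      _ ≤ _ := by gcongr
  have hK : (p : ℝ) ^ κ = ((p : ℝ) ^ γ) ^ (4 * 3 ^ J) := by
    rw [← Real.rpow_natCast, ← Real.rpow_mul hp0.le]
    congr 1
    rw [hγ, div_mul_cancel₀]
    positivity
  have hpow : ∀ k : ℕ, ((p : ℝ) ^ κ) ^ k = (p : ℝ) ^ (κ * k) := by
    intro k
    rw [← Real.rpow_natCast, ← Real.rpow_mul hp0.le]
  have := bgk_core H h1 h2 h3 h4 ((p : ℝ) ^ γ) ((p : ℝ) ^ κ) hq J n M hK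
    (by
      rw [hpow]
      nth_rw 1 [← Real.rpow_one (p : ℝ)]
      apply Real.rpow_lt_rpow_of_exponent_lt hp1
      rw [div_lt_iff₀ hκ0] at hJ
      linarith) hM
    (by
      rw [hpow, hκ, div_mul_cancel₀ _ hM0.ne']; exact hH)
    (by
      rw [← pow_mul, hpow]
      nth_rw 1 [← Real.rpow_one (p : ℝ)]
      apply Real.rpow_lt_rpow_of_exponent_lt hp1
      have h25 : 8 ≤ M := by omega
      have hM4 : ((M - 4 : ℕ) : ℝ) = M - 4 := by
        rw [Nat.cast_sub (by omega)]; norm_num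
      have hM8 : (8 : ℝ) ≤ M := by exact_mod_cast h25
      push_cast
      rw [hM4]
      have e1 : ε / 2 ≤ κ * (M - 4) := by
        rw [hκ, div_mul_eq_mul_div, le_div_iff₀ hM0]
        nlinarith
      rw [div_lt_iff₀ hε] at hn
      calc (1 : ℝ) < n * (ε / 2) := by linarith
        _ ≤ (n + 1) * (ε / 2) := by nlinarith
        _ ≤ (n + 1) * (κ * (M - 4)) := by gcongr
        _ = _ := by ring) a ha
  rw [Real.rpow_neg hp0.le, ← div_eq_mul_inv]
  exact this
end SubgroupSums

section LinSums
open Finset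

local notation "χ" => (ZMod.stdAddChar : AddChar (ZMod _) ℂ)

lemma periodic_sum_bound (f : ℕ → ℂ) (hf : ∀ n, ‖f n‖ ≤ 1) (t : ℕ) (ht : 0 < t)
    (hper : ∀ n, f (n + t) = f n) (B : ℝ) (hB : ‖∑ n ∈ range t, f n‖ ≤ B) (N : ℕ) :
    ‖∑ n ∈ range N, f n‖ ≤ N / t * B + t := by
  have hB0 : 0 ≤ B := (norm_nonneg _).trans hB
  have ht' : (0 : ℝ) < t := by exact_mod_cast ht
  induction N using Nat.strong_induction_on with
  | _ N ih =>
    rcases lt_or_ge N t with h | h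
    · have h1 : ‖∑ n ∈ range N, f n‖ ≤ N := by
        refine (norm_sum_le _ _).trans ((Finset.sum_le_sum fun n _ => hf n).trans ?_)
        simp
      have h2 : (N : ℝ) ≤ t := by exact_mod_cast h.le
      have : 0 ≤ (N : ℝ) / t * B := by positivity
      linarith
    · obtain ⟨k, rfl⟩ := Nat.exists_eq_add_of_le h
      rw [Finset.sum_range_add]
      have h3 : ∑ x ∈ range k, f (t + x) = ∑ x ∈ range k, f x := by
        apply Finset.sum_congr rfl; intro x _
        rw [add_comm, hper]
      rw [h3]
      have h4 := ih k (by omega)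
      have h5 := norm_add_le (∑ x ∈ range t, f x) (∑ x ∈ range k, f x)
      have h6 : ((t + k : ℕ) : ℝ) / t * B = B + k / t * B := by
        push_cast; field_simp
      rw [h6]; linarith

theorem lin_sum (ε : ℝ) (hε : 0 < ε) : ∃ γ : ℝ, 0 < γ ∧ ∃ P₀ : ℝ, ∀ (p : ℕ) [Fact p.Prime],
    P₀ ≤ p → ∀ (x : ℕ → ZMod p) (g h : ZMod p), g ≠ 0 → (∀ n, x (n + 1) = g * x n + h) →
    ∀ N : ℕ, (p : ℝ) ^ (1 + ε) ≤ N → (p : ℝ) ^ ε ≤ ((range N).image x).card →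
    ∀ a : ZMod p, a ≠ 0 → ‖∑ n ∈ range N, χ (a * x n)‖ ≤ N * (2 * (p : ℝ) ^ (-γ)) := by
  obtain ⟨γ, hγ, P₀, hbgk⟩ := bgk ε hε
  refine ⟨min γ ε, lt_min hγ hε, P₀, ?_⟩
  intro p _ hp x g h hg hrec N hN hV a ha
  have hpp : p.Prime := Fact.out
  have hp1 : (1 : ℝ) < p := by exact_mod_cast hpp.one_lt
  have hp0 : (0 : ℝ) < p := by linarith
  have hV1 : 1 < ((range N).image x).card := by
    have : (1 : ℝ) < ((range N).image x).card := (Real.one_lt_rpow hp1 hε).trans_le hV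
    exact_mod_cast this
  have hnc : ¬ (∀ n, x n = x 0) := by
    intro hc
    have : (range N).image x ⊆ {x 0} := by
      intro y hy
      obtain ⟨n, _, rfl⟩ := Finset.mem_image.1 hy
      simp [hc n]
    have := Finset.card_le_card this
    simp at this; omega
  have key : ∃ t : ℕ, 0 < t ∧ t ≤ p ∧ (∀ n, χ (a * x (n + t)) = χ (a * x n)) ∧
      ‖∑ n ∈ range t, χ (a * x n)‖ ≤ t * (p : ℝ) ^ (-γ) := by
    by_cases hg1 : g = 1
    · subst hg1
      have hx : ∀ n, x n = x 0 + n * h := by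
        intro n
        induction n with
        | zero => simp
        | succ n ih => rw [hrec, ih]; push_cast; ring
      have hh : h ≠ 0 := by
        rintro rfl
        exact hnc fun n => by rw [hx n]; simp
      refine ⟨p, hpp.pos, le_rfl, fun n => by rw [hx, hx n]; simp, ?_⟩
      have hz : ∀ n : ℕ, χ (a * x n) = χ (a * x 0) * (χ (a * h)) ^ n := by
        intro n
        rw [hx n, mul_add, AddChar.map_add_eq_mul, ← AddChar.map_nsmul_eq_pow]
        congr 2; rw [nsmul_eq_mul]; ring
      have hz1 : (χ (a * h)) ≠ 1 := by
        intro hc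
        have : a * h = 0 := ZMod.injective_stdAddChar (by rw [hc, AddChar.map_zero_eq_one])
        exact (mul_ne_zero ha hh) this
      have hzp : (χ (a * h)) ^ p = 1 := by
        rw [← AddChar.map_nsmul_eq_pow]; simp
      have : ∑ n ∈ range p, χ (a * x n) = 0 := by
        rw [Finset.sum_congr rfl fun n _ => hz n, ← Finset.mul_sum, geom_sum_eq hz1, hzp]; simp
      rw [this, norm_zero]; positivity
    · set xs := h / (1 - g) with hxs
      have hg1' : 1 - g ≠ 0 := sub_ne_zero.2 (Ne.symm hg1)
      have hfix : g * xs + h = xs := by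
        rw [hxs]; field_simp; ring
      have hx : ∀ n, x n = xs + g ^ n * (x 0 - xs) := by
        intro n
        induction n with
        | zero => simp
        | succ n ih => rw [hrec, ih, pow_succ]; linear_combination hfix
      have hy : x 0 - xs ≠ 0 := by
        intro hc
        exact hnc fun n => by rw [hx n, hc, mul_zero, add_zero, sub_eq_zero.1 hc]
      set t := orderOf g with ht
      have hfin : IsOfFinOrder g := by
        rw [isOfFinOrder_iff_pow_eq_one]
        exact ⟨p - 1, by have := hpp.two_le; omega, ZMod.pow_card_sub_one_eq_one hg⟩
      have ht0 : 0 < t := hfin.orderOf_pos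
      have htp : t ≤ p := by
        have := Nat.le_of_dvd (by have := hpp.two_le; omega)
          (orderOf_dvd_of_pow_eq_one (ZMod.pow_card_sub_one_eq_one hg))
        omega
      have hgt : g ^ t = 1 := pow_orderOf_eq_one g
      set H := (range t).image (fun k => g ^ k) with hH
      have hinj : Set.InjOn (fun k => g ^ k) (range t : Set ℕ) := by
        intro i hi j hj hij
        exact pow_injOn_Iio_orderOf (by simpa using hi) (by simpa using hj) hij
      have hHc : H.card = t := by
        rw [hH, Finset.card_image_of_injOn hinj, card_range]
      have hmem : ∀ k, g ^ k ∈ H := by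
        intro k
        rw [← pow_mod_orderOf]
        exact Finset.mem_image.2 ⟨k % t, mem_range.2 (Nat.mod_lt _ ht0), rfl⟩
      have hsum : ∑ n ∈ range t, χ (a * x n) = χ (a * xs) * ∑ b ∈ H, χ (a * (x 0 - xs) * b) := by
        rw [hH, Finset.sum_image hinj, Finset.mul_sum]
        apply Finset.sum_congr rfl; intro n _
        rw [hx n, ← AddChar.map_add_eq_mul]; congr 1; ring
      refine ⟨t, ht0, htp, fun n => by rw [hx, hx n, pow_add, hgt, mul_one], ?_⟩
      rw [hsum, norm_mul, chi_norm, one_mul, ← hHc]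
      apply hbgk p hp H
      · intro b hb
        obtain ⟨k, _, rfl⟩ := Finset.mem_image.1 hb
        exact pow_ne_zero _ hg
      · intro b hb b' hb'
        obtain ⟨k, _, rfl⟩ := Finset.mem_image.1 hb
        obtain ⟨k', _, rfl⟩ := Finset.mem_image.1 hb'
        simp only [← pow_add]; exact hmem _
      · intro b hb
        obtain ⟨k, hk, rfl⟩ := Finset.mem_image.1 hb
        have : (g ^ k)⁻¹ = g ^ (t - k) := by
          rw [inv_eq_iff_eq_inv, eq_comm]
          apply inv_eq_of_mul_eq_one_left
          rw [← pow_add, Nat.add_sub_cancel' (mem_range.1 hk).le, hgt]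
        simp only [this]; exact hmem _
      · exact ⟨_, hmem 0⟩
      · refine hV.trans ?_
        have : (range N).image x ⊆ H.image (fun b => xs + b * (x 0 - xs)) := by
          intro y hy
          obtain ⟨n, _, rfl⟩ := Finset.mem_image.1 hy
          exact Finset.mem_image.2 ⟨g ^ n, hmem n, (hx n).symm⟩
        exact_mod_cast (Finset.card_le_card this).trans Finset.card_image_le
      · exact mul_ne_zero ha hy
  obtain ⟨t, ht0, htp, hper, hB⟩ := key
  have h1 := periodic_sum_bound (fun n => χ (a * x n)) (fun n => (chi_norm _).le) t ht0 hper _ hB N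
  refine h1.trans ?_
  have ht' : (0 : ℝ) < t := by exact_mod_cast ht0
  have h2 : (N : ℝ) / t * (t * (p : ℝ) ^ (-γ)) = N * (p : ℝ) ^ (-γ) := by field_simp
  have h3 : (t : ℝ) ≤ N * (p : ℝ) ^ (-ε) := by
    calc (t : ℝ) ≤ p := by exact_mod_cast htp
      _ = (p : ℝ) ^ (1 + ε) * (p : ℝ) ^ (-ε) := by
        rw [← Real.rpow_add hp0]; simp
      _ ≤ _ := by gcongr
  have h4 : (p : ℝ) ^ (-γ) ≤ (p : ℝ) ^ (-(min γ ε)) :=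
    Real.rpow_le_rpow_of_exponent_le hp1.le (neg_le_neg (min_le_left _ _))
  have h5 : (p : ℝ) ^ (-ε) ≤ (p : ℝ) ^ (-(min γ ε)) :=
    Real.rpow_le_rpow_of_exponent_le hp1.le (neg_le_neg (min_le_right _ _))
  rw [h2]
  have hN0 : (0 : ℝ) ≤ N := Nat.cast_nonneg _
  calc _ ≤ (N : ℝ) * (p : ℝ) ^ (-γ) + N * (p : ℝ) ^ (-ε) := by linarith
    _ ≤ N * (p : ℝ) ^ (-(min γ ε)) + N * (p : ℝ) ^ (-(min γ ε)) := by gcongr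
    _ = _ := by ring
end LinSums

section FSys
open Finset

variable {p : ℕ} [Fact p.Prime] {m : ℕ}

lemma bind_eq_sum (f : Fin (m+1) → MvPolynomial (Fin (m+1)) (ZMod p)) (q : MvPolynomial (Fin (m+1)) (ZMod p)) :
    bind₁ f q = ∑ e ∈ q.support, C (coeff e q) * ∏ l, f l ^ e l := by
  rw [bind₁, aeval_def, eval₂_eq']
  rfl

lemma degreeOf_bind_le (a : Fin (m+1)) (f : Fin (m+1) → MvPolynomial (Fin (m+1)) (ZMod p))
    (q : MvPolynomial (Fin (m+1)) (ZMod p)) (B : ℕ)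
    (h : ∀ e ∈ q.support, ∑ l, e l * degreeOf a (f l) ≤ B) : degreeOf a (bind₁ f q) ≤ B := by
  rw [bind_eq_sum]
  refine (degreeOf_sum_le _ _ _).trans (Finset.sup_le fun e he => ?_)
  refine (degreeOf_C_mul_le _ _ _).trans ((degreeOf_prod_le _ _ _).trans (le_trans ?_ (h e he)))
  exact Finset.sum_le_sum fun l _ => degreeOf_pow_le _ _ _

lemma totalDegree_bind_le (f : Fin (m+1) → MvPolynomial (Fin (m+1)) (ZMod p))
    (q : MvPolynomial (Fin (m+1)) (ZMod p)) (B : ℕ)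
    (h : ∀ e ∈ q.support, ∑ l, e l * totalDegree (f l) ≤ B) : totalDegree (bind₁ f q) ≤ B := by
  rw [bind_eq_sum]
  refine totalDegree_finsetSum_le fun e he => ?_
  refine (totalDegree_mul _ _).trans ?_
  rw [totalDegree_C, zero_add]
  refine (totalDegree_finsetProd _ _).trans (le_trans ?_ (h e he))
  exact Finset.sum_le_sum fun l _ => totalDegree_pow _ _

lemma degreeOf_eq_zero_of_vars {a : Fin (m+1)} {q : MvPolynomial (Fin (m+1)) (ZMod p)}
    (h : a ∉ q.vars) : degreeOf a q = 0 := by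
  classical
  rw [degreeOf_def]
  rw [vars_def, Multiset.mem_toFinset] at h
  exact Multiset.count_eq_zero.2 h

lemma support_zero_of_vars {a : Fin (m+1)} {q : MvPolynomial (Fin (m+1)) (ZMod p)}
    (h : a ∉ q.vars) {e : Fin (m+1) →₀ ℕ} (he : e ∈ q.support) : e a = 0 := by
  by_contra hc
  exact h ((mem_vars_iff_mem_support a).2 ⟨e, he, Finsupp.mem_support_iff.2 hc⟩)

lemma notMem_vars_of {a : Fin (m+1)} {q : MvPolynomial (Fin (m+1)) (ZMod p)}
    (h : ∀ e ∈ q.support, e a = 0) : a ∉ q.vars := by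
  intro hc
  obtain ⟨e, he, hea⟩ := (mem_vars_iff_mem_support a).1 hc
  exact Finsupp.mem_support_iff.1 hea (h e he)

/-- the structural data at index `i` in convenient form -/
structure GHData (s : ℕ → ℕ → ℕ) (F : Fin (m+1) → MvPolynomial (Fin (m+1)) (ZMod p))
    (i i' : Fin (m+1)) (G H Gt : MvPolynomial (Fin (m+1)) (ZMod p)) (g : ZMod p) : Prop where
  g0 : g ≠ 0
  hF : F i = X i * G + H
  vG : ∀ l ∈ G.vars, i < l
  vH : ∀ l ∈ H.vars, i < l
  vGt : ∀ l ∈ Gt.vars, i < l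
  hG : G = C g * (∏ j ∈ univ.filter (fun j : Fin (m+1) => i < j), X j ^ s i.val j.val) + Gt
  hGt : ∀ e ∈ Gt.support, e i' < s i.val i'.val

lemma exists_GHData {s : ℕ → ℕ → ℕ} {F : Fin (m+1) → MvPolynomial (Fin (m+1)) (ZMod p)}
    (hF : IsFSystem m s F) (i i' : Fin (m+1)) (hi : (i : ℕ) + 1 = i') :
    ∃ G H Gt g, GHData s F i i' G H Gt g := by
  classical
  obtain ⟨G, H, Gt, g, h1, h2, h3, h4, h5, h6, h7⟩ := hF.2 i (by have := i'.2; omega)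
  have vG : ∀ l ∈ G.vars, i < l := by
    intro l hl
    by_contra hc
    exact notMem_vars_of (fun e he => h3 e he l (not_lt.1 hc)) hl
  refine ⟨G, H, Gt, g, h1, h2, vG, ?_, ?_, h5, ?_⟩
  · intro l hl
    by_contra hc
    exact notMem_vars_of (fun e he => h4 e he l (not_lt.1 hc)) hl
  · intro l hl
    have e : Gt = G - C g * (∏ j ∈ univ.filter (fun j : Fin (m+1) => i < j), X j ^ s i.val j.val) := by
      rw [h5]; ring
    rw [e] at hl
    rcases Finset.mem_union.1 (vars_sub_subset _ hl) with h | h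
    · exact vG l h
    · rcases Finset.mem_union.1 (vars_mul _ _ h) with h | h
      · rw [vars_C] at h; simp at h
      · obtain ⟨j, hj, hj'⟩ := Finset.mem_biUnion.1 (vars_prod _ h)
        have := vars_pow _ _ hj'
        rw [vars_X, Finset.mem_singleton] at this
        rw [this]; exact (Finset.mem_filter.1 hj).2
  · intro e he
    exact h6 e he i' (by rw [Fin.lt_def]; omega)

/-- iterates -/
noncomputable def Fk (F : Fin (m+1) → MvPolynomial (Fin (m+1)) (ZMod p)) (k : ℕ) :
    Fin (m+1) → MvPolynomial (Fin (m+1)) (ZMod p) := iterSys m (fun _ => F) k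

lemma Fk_succ (F : Fin (m+1) → MvPolynomial (Fin (m+1)) (ZMod p)) (k : ℕ) (j : Fin (m+1)) :
    Fk F (k+1) j = bind₁ (Fk F k) (F j) := rfl

lemma Fk_zero (F : Fin (m+1) → MvPolynomial (Fin (m+1)) (ZMod p)) (j : Fin (m+1)) :
    Fk F 0 j = X j := rfl

lemma vars_F {s : ℕ → ℕ → ℕ} {F : Fin (m+1) → MvPolynomial (Fin (m+1)) (ZMod p)}
    (hF : IsFSystem m s F) (j : Fin (m+1)) : ∀ l ∈ (F j).vars, j ≤ l := by
  classical
  intro l hl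
  by_cases hj : (j : ℕ) < m
  · obtain ⟨G, H, Gt, g, hd⟩ := exists_GHData hF j ⟨j + 1, by omega⟩ rfl
    rw [hd.hF] at hl
    rcases Finset.mem_union.1 (vars_add_subset _ _ hl) with h | h
    · rcases Finset.mem_union.1 (vars_mul _ _ h) with h | h
      · rw [vars_X, Finset.mem_singleton] at h; exact h.ge
      · exact (hd.vG l h).le
    · exact (hd.vH l h).le
  · have hj' : j = Fin.last m := by ext; simp; omega
    subst hj'
    obtain ⟨g, h, _, e⟩ := hF.1
    rw [e] at hl
    rcases Finset.mem_union.1 (vars_add_subset _ _ hl) with h | h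
    · rcases Finset.mem_union.1 (vars_mul _ _ h) with h | h
      · rw [vars_C] at h; simp at h
      · rw [vars_X, Finset.mem_singleton] at h; exact h.ge
    · rw [vars_C] at h; simp at h

lemma vars_Fk {s : ℕ → ℕ → ℕ} {F : Fin (m+1) → MvPolynomial (Fin (m+1)) (ZMod p)}
    (hF : IsFSystem m s F) (k : ℕ) (j : Fin (m+1)) : ∀ l ∈ (Fk F k j).vars, j ≤ l := by
  induction k generalizing j with
  | zero => intro l hl; rw [Fk_zero, vars_X, Finset.mem_singleton] at hl; exact hl.ge
  | succ k ih =>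
    intro l hl
    rw [Fk_succ] at hl
    obtain ⟨i, hi, hl'⟩ := mem_vars_bind₁ _ _ hl
    exact (vars_F hF j i hi).trans (ih i l hl')

lemma vars_bind_gt {s : ℕ → ℕ → ℕ} {F : Fin (m+1) → MvPolynomial (Fin (m+1)) (ZMod p)}
    (hF : IsFSystem m s F) (k : ℕ) (i : Fin (m+1)) {G : MvPolynomial (Fin (m+1)) (ZMod p)}
    (hG : ∀ l ∈ G.vars, i < l) : ∀ l ∈ (bind₁ (Fk F k) G).vars, i < l := by
  intro l hl
  obtain ⟨j, hj, hl'⟩ := mem_vars_bind₁ _ _ hl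
  exact (hG j hj).trans_le (vars_Fk hF k j l hl')

lemma degree_bind_G {s : ℕ → ℕ → ℕ} {F : Fin (m+1) → MvPolynomial (Fin (m+1)) (ZMod p)}
    (hF : IsFSystem m s F) (k : ℕ) (i i' : Fin (m+1)) (hi : (i : ℕ) + 1 = i')
    (hs : s i.val i'.val ≠ 0) (hk : ∀ j, degreeOf j (Fk F k j) = 1)
    {G H Gt g} (hd : GHData s F i i' G H Gt g) :
    degreeOf i' (bind₁ (Fk F k) G) = s i.val i'.val ∧ bind₁ (Fk F k) G ≠ 0 := by
  classical
  have hne : ∀ j, Fk F k j ≠ 0 := by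
    intro j hc
    have := hk j
    rw [hc, degreeOf_zero] at this; omega
  have hz : ∀ j, i < j → j ≠ i' → degreeOf i' (Fk F k j) = 0 := by
    intro j hj hji
    apply degreeOf_eq_zero_of_vars
    intro hc
    have h1 := vars_Fk hF k j i' hc
    rw [Fin.lt_def] at hj; rw [Fin.le_def] at h1
    apply hji; ext; omega
  have hii : i < i' := by rw [Fin.lt_def]; omega
  have e : bind₁ (Fk F k) G = C g * (∏ j ∈ univ.filter (fun j : Fin (m+1) => i < j),
      Fk F k j ^ s i.val j.val) + bind₁ (Fk F k) Gt := by
    conv_lhs => rw [hd.hG]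
    simp [map_prod]
  have h1 : degreeOf i' (C g * (∏ j ∈ univ.filter (fun j : Fin (m+1) => i < j),
      Fk F k j ^ s i.val j.val)) = s i.val i'.val := by
    rw [degreeOf_C_mul _ _ (mem_nonZeroDivisors_of_ne_zero hd.g0),
      degreeOf_prod_eq _ _ (fun j _ => pow_ne_zero _ (hne j)),
      Finset.sum_eq_single i']
    · rw [degreeOf_pow_eq _ _ _ (hne _), hk, mul_one]
    · intro j hj hji
      rw [degreeOf_pow_eq _ _ _ (hne _), hz j (Finset.mem_filter.1 hj).2 hji, mul_zero]
    · intro hc; exact absurd (Finset.mem_filter.2 ⟨mem_univ _, hii⟩) hc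
  have h2 : degreeOf i' (bind₁ (Fk F k) Gt) < s i.val i'.val := by
    have : degreeOf i' (bind₁ (Fk F k) Gt) ≤ s i.val i'.val - 1 := by
      apply degreeOf_bind_le
      intro e he
      rw [Finset.sum_eq_single i']
      · rw [hk, mul_one]; have := hd.hGt e he; omega
      · intro l _ hl
        by_cases hil : i < l
        · rw [hz l hil hl, mul_zero]
        · rw [support_zero_of_vars (fun hc => hil (hd.vGt l hc)) he, zero_mul]
      · intro hc; exact absurd (mem_univ _) hc
    omega
  have h3 : degreeOf i' (bind₁ (Fk F k) G) = s i.val i'.val := by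
    rw [e, degreeOf_add_eq_of_degreeOf_lt (by rw [h1]; exact h2), h1]
  refine ⟨h3, fun hc => hs ?_⟩
  rw [← h3, hc, degreeOf_zero]

lemma degree_Fk {s : ℕ → ℕ → ℕ} {F : Fin (m+1) → MvPolynomial (Fin (m+1)) (ZMod p)}
    (hF : IsFSystem m s F) (hs : ∀ i < m, s i (i+1) ≠ 0) (k : ℕ) :
    ∀ j, degreeOf j (Fk F k j) = 1 := by
  induction k with
  | zero => intro j; rw [Fk_zero, degreeOf_X_self]
  | succ k ih =>
    have hne : ∀ j, Fk F k j ≠ 0 := by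
      intro j hc
      have := ih j
      rw [hc, degreeOf_zero] at this; omega
    intro j
    by_cases hj : (j : ℕ) < m
    · obtain ⟨G, H, Gt, g, hd⟩ := exists_GHData hF j ⟨j + 1, by omega⟩ rfl
      obtain ⟨-, hb⟩ := degree_bind_G hF k j ⟨j+1, by omega⟩ rfl (hs _ hj) ih hd
      have e : Fk F (k+1) j = Fk F k j * bind₁ (Fk F k) G + bind₁ (Fk F k) H := by
        rw [Fk_succ, hd.hF]; simp
      have z1 : degreeOf j (bind₁ (Fk F k) G) = 0 :=
        degreeOf_eq_zero_of_vars fun hc => lt_irrefl _ (vars_bind_gt hF k j hd.vG j hc)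
      have z2 : degreeOf j (bind₁ (Fk F k) H) = 0 :=
        degreeOf_eq_zero_of_vars fun hc => lt_irrefl _ (vars_bind_gt hF k j hd.vH j hc)
      have z3 : degreeOf j (Fk F k j * bind₁ (Fk F k) G) = 1 := by
        rw [degreeOf_mul_eq (hne j) hb, ih, z1]
      rw [e, degreeOf_add_eq_of_degreeOf_lt (by rw [z3, z2]; norm_num), z3]
    · have hj' : j = Fin.last m := by ext; simp; omega
      subst hj'
      obtain ⟨g, h, hg, e⟩ := hF.1
      have e' : Fk F (k+1) (Fin.last m) = C g * Fk F k (Fin.last m) + C h := by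
        rw [Fk_succ, e]; simp
      have z3 : degreeOf (Fin.last m) (C g * Fk F k (Fin.last m)) = 1 := by
        rw [degreeOf_C_mul _ _ (mem_nonZeroDivisors_of_ne_zero hg), ih]
      rw [e', degreeOf_add_eq_of_degreeOf_lt (by rw [z3, degreeOf_C]; norm_num), z3]

lemma totalDegree_Fk {s : ℕ → ℕ → ℕ} {F : Fin (m+1) → MvPolynomial (Fin (m+1)) (ZMod p)}
    (hF : IsFSystem m s F) (hs : ∀ i < m, s i (i+1) ≠ 0) (d : ℕ)
    (hdeg : ∀ j, (F j).totalDegree ≤ d) (k : ℕ) :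
    ∀ j : Fin (m+1), totalDegree (Fk F k j) ≤ (1 + d * k) ^ (m - (j : ℕ)) := by
  induction k with
  | zero => intro j; rw [Fk_zero, totalDegree_X]; simp
  | succ k ih =>
    intro j
    rw [Fk_succ]
    apply totalDegree_bind_le
    intro e he
    have he1 : e j ≤ 1 := by
      have := degree_Fk hF hs 1 j
      rw [Fk_succ] at this
      have h0 : bind₁ (Fk F 0) (F j) = F j := by
        have : Fk F 0 = X := rfl
        rw [this, bind₁_X_left]; rfl
      rw [h0] at this
      exact degreeOf_le_iff.1 this.le e he
    have hed : ∑ l, e l ≤ d := by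
      have := (le_totalDegree he).trans (hdeg j)
      rwa [Finsupp.sum_fintype _ _ (fun _ => rfl)] at this
    by_cases hj : (j : ℕ) < m
    · obtain ⟨r, hr⟩ : ∃ r, m - (j : ℕ) = r + 1 := ⟨m - j - 1, by omega⟩
      have hb : ∀ l, e l * (Fk F k l).totalDegree ≤
          (if l = j then (1 + d * k) ^ (r + 1) else 0) + e l * (1 + d * k) ^ r := by
        intro l
        by_cases hlj : l = j
        · subst hlj
          rw [if_pos rfl]
          calc _ ≤ 1 * (1 + d * k) ^ (r + 1) := by rw [← hr]; exact Nat.mul_le_mul he1 (ih l)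
            _ ≤ _ := by omega
        · rw [if_neg hlj, zero_add]
          by_cases hl : j ≤ l
          · refine Nat.mul_le_mul_left _ ((ih l).trans (Nat.pow_le_pow_right (by omega) ?_))
            have : (j : ℕ) < l := lt_of_le_of_ne hl (fun h => hlj (Fin.ext h.symm))
            omega
          · rw [support_zero_of_vars (fun hc => hl (vars_F hF j l hc)) he]; simp
      calc _ ≤ ∑ l, ((if l = j then (1 + d * k) ^ (r + 1) else 0) + e l * (1 + d * k) ^ r) :=
            Finset.sum_le_sum fun l _ => hb l
        _ = (1 + d * k) ^ (r + 1) + (∑ l, e l) * (1 + d * k) ^ r := by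
            rw [Finset.sum_add_distrib, Finset.sum_ite_eq' univ j, if_pos (mem_univ _), Finset.sum_mul]
        _ ≤ (1 + d * k) ^ (r + 1) + d * (1 + d * k) ^ r := by gcongr
        _ = (1 + d * (k + 1)) * (1 + d * k) ^ r := by ring
        _ ≤ (1 + d * (k + 1)) * (1 + d * (k + 1)) ^ r := by gcongr; omega
        _ = _ := by rw [hr]; ring
    · have hj' : (j : ℕ) = m := by omega
      rw [hj', Nat.sub_self, pow_zero, Finset.sum_eq_single j]
      · have := ih j
        rw [hj', Nat.sub_self, pow_zero] at this
        calc _ ≤ 1 * 1 := Nat.mul_le_mul he1 this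
          _ = _ := by norm_num
      · intro l _ hl
        have : ¬ j ≤ l := fun h => hl (Fin.ext (by rw [Fin.le_def] at h; omega))
        rw [support_zero_of_vars (fun hc => this (vars_F hF j l hc)) he, zero_mul]
      · intro hc; exact absurd (mem_univ _) hc

lemma totalDegree_G {s : ℕ → ℕ → ℕ} {F : Fin (m+1) → MvPolynomial (Fin (m+1)) (ZMod p)}
    (i i' : Fin (m+1)) (d : ℕ) (hdeg : ∀ j, (F j).totalDegree ≤ d)
    {G H Gt g} (hd : GHData s F i i' G H Gt g) : ∀ e ∈ G.support, ∑ l, e l ≤ d := by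
  classical
  intro e he
  have : (Finsupp.single i 1 + e) ∈ (F i).support := by
    rw [mem_support_iff, hd.hF, coeff_add, coeff_X_mul]
    have h0 : coeff (Finsupp.single i 1 + e) H = 0 := by
      by_contra hc
      have := support_zero_of_vars (fun hc => lt_irrefl _ (hd.vH i hc)) (mem_support_iff.2 hc)
      simp at this
    rw [h0, add_zero]
    exact mem_support_iff.1 he
  have h := (le_totalDegree this).trans (hdeg i)
  rw [Finsupp.sum_fintype _ _ (fun _ => rfl)] at h
  refine le_trans (Finset.sum_le_sum fun l _ => ?_) h
  simp

end FSys

section FSys2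
open Finset

variable {p : ℕ} [Fact p.Prime] {m : ℕ}

/-- the map on vectors -/
noncomputable def Phi (F : Fin (m+1) → MvPolynomial (Fin (m+1)) (ZMod p)) (w : Fin (m+1) → ZMod p) :
    Fin (m+1) → ZMod p := fun j => eval w (F j)

lemma eval_Fk (F : Fin (m+1) → MvPolynomial (Fin (m+1)) (ZMod p)) (k : ℕ)
    (w : Fin (m+1) → ZMod p) (j : Fin (m+1)) : eval w (Fk F k j) = ((Phi F)^[k] w) j := by
  induction k generalizing j with
  | zero => rw [Fk_zero, eval_X]; rfl
  | succ k ih =>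
    rw [Fk_succ, Function.iterate_succ_apply']
    have : (Phi F)^[k] w = fun l => eval w (Fk F k l) := funext fun l => (ih l).symm
    rw [this]
    exact eval₂Hom_bind₁ (RingHom.id _) w (Fk F k) (F j)

lemma eval_congr_vars (w w' : Fin (m+1) → ZMod p) (q : MvPolynomial (Fin (m+1)) (ZMod p))
    (h : ∀ l ∈ q.vars, w l = w' l) : eval w q = eval w' q :=
  eval₂Hom_congr' rfl (fun i hi _ => h i hi) rfl

lemma lin_indep_P (a : Fin (m+1)) (σ : ℕ) (hσ : 0 < σ)
    (P : ℕ → MvPolynomial (Fin (m+1)) (ZMod p)) (hP : ∀ k, P k ≠ 0)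
    (hPd : ∀ k, degreeOf a (P k) = k * σ) (c : ℕ → ZMod p) (K : ℕ)
    (hc : ∃ k < K, c k ≠ 0) : ∑ k ∈ range K, C (c k) * P k ≠ 0 := by
  classical
  have key : ∀ K, (∑ k ∈ range K, C (c k) * P k = 0 → ∀ k < K, c k = 0) ∧
      (degreeOf a (∑ k ∈ range K, C (c k) * P k) ≤ (K - 1) * σ) := by
    intro K
    induction K with
    | zero => simp
    | succ K ih =>
      have hdK : degreeOf a (∑ k ∈ range (K+1), C (c k) * P k) ≤ (K + 1 - 1) * σ := by
        refine (degreeOf_sum_le _ _ _).trans (Finset.sup_le fun k hk => ?_)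
        refine (degreeOf_C_mul_le _ _ _).trans ?_
        rw [hPd]
        exact Nat.mul_le_mul_right _ (by have := mem_range.1 hk; omega)
      refine ⟨?_, hdK⟩
      intro h0
      by_cases hcK : c K = 0
      · intro k hk
        rcases Nat.lt_succ_iff_lt_or_eq.1 hk with h | rfl
        · refine ih.1 ?_ k h
          rwa [Finset.sum_range_succ, hcK, C_0, zero_mul, add_zero] at h0
        · exact hcK
      · exfalso
        rw [Finset.sum_range_succ] at h0
        have h1 : degreeOf a (C (c K) * P K) = K * σ := by
          rw [degreeOf_C_mul _ _ (mem_nonZeroDivisors_of_ne_zero hcK), hPd]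
        rcases Nat.eq_zero_or_pos K with rfl | hK
        · simp only [range_zero, sum_empty, zero_add] at h0
          rcases mul_eq_zero.1 h0 with h | h
          · exact hcK (by simpa using h)
          · exact hP 0 h
        · have h2 : C (c K) * P K = -∑ k ∈ range K, C (c k) * P k := by
            linear_combination h0
          have h3 := ih.2
          rw [← degreeOf_neg, ← h2, h1] at h3
          have : K - 1 < K := by omega
          have := Nat.mul_lt_mul_of_pos_right this hσ
          omega
  obtain ⟨k, hk, hck⟩ := hc
  exact fun h => hck ((key K).1 h k hk)

lemma exists_P {s : ℕ → ℕ → ℕ} {F : Fin (m+1) → MvPolynomial (Fin (m+1)) (ZMod p)}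
    (hF : IsFSystem m s F) (hs : ∀ i < m, s i (i+1) ≠ 0) (d : ℕ)
    (hdeg : ∀ j, (F j).totalDegree ≤ d) (i : Fin (m+1)) (hi : (i : ℕ) < m) :
    ∃ P : ℕ → MvPolynomial (Fin (m+1)) (ZMod p),
      (∀ k w t, ((Phi F)^[k] (w + Pi.single i t)) i = ((Phi F)^[k] w) i + t * eval w (P k)) ∧
      (∀ k w t, ∀ j, i < j → ((Phi F)^[k] (w + Pi.single i t)) j = ((Phi F)^[k] w) j) ∧
      (∀ (K : ℕ) (c : ℕ → ZMod p), (∃ k < K, c k ≠ 0) → ∑ k ∈ range K, C (c k) * P k ≠ 0) ∧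
      (∀ k, totalDegree (P k) ≤ (1 + d * k) ^ m) := by
  classical
  set i' : Fin (m+1) := ⟨i + 1, by omega⟩ with hi'
  obtain ⟨G, H, Gt, g, hd⟩ := exists_GHData hF i i' rfl
  have hG := fun k => degree_bind_G hF k i i' rfl (hs _ hi) (degree_Fk hF hs k) hd
  let P : ℕ → MvPolynomial (Fin (m+1)) (ZMod p) := fun k => ∏ r ∈ range k, bind₁ (Fk F r) G
  have hP0 : ∀ k, P k ≠ 0 := fun k => Finset.prod_ne_zero_iff.2 fun r _ => (hG r).2
  have hPd : ∀ k, degreeOf i' (P k) = k * s i i' := by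
    intro k
    rw [degreeOf_prod_eq _ _ (fun r _ => (hG r).2), Finset.sum_congr rfl fun r _ => (hG r).1]
    simp
  have hshift : ∀ (q : MvPolynomial (Fin (m+1)) (ZMod p)), (∀ l ∈ q.vars, i < l) →
      ∀ w t, eval (w + Pi.single i t) q = eval w q := by
    intro q hq w t
    apply eval_congr_vars
    intro l hl
    simp [Pi.single_eq_of_ne (hq l hl).ne']
  refine ⟨P, ?_, ?_, ?_, ?_⟩
  · intro k w t
    rw [← eval_Fk, ← eval_Fk]
    induction k with
    | zero => simp [Fk_zero, P]
    | succ k ih =>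
      have e : Fk F (k+1) i = Fk F k i * bind₁ (Fk F k) G + bind₁ (Fk F k) H := by
        rw [Fk_succ, hd.hF]; simp
      have e2 : P (k+1) = P k * bind₁ (Fk F k) G := Finset.prod_range_succ _ _
      rw [e, e2]
      simp only [map_add, map_mul]
      rw [hshift _ (vars_bind_gt hF k i hd.vG), hshift _ (vars_bind_gt hF k i hd.vH), ih]
      ring
  · intro k w t j hj
    rw [← eval_Fk, ← eval_Fk]
    exact hshift _ (fun l hl => hj.trans_le (vars_Fk hF k j l hl)) w t
  · intro K c hc
    exact lin_indep_P i' (s i i') (Nat.pos_of_ne_zero (hs _ hi)) P hP0 hPd c K hc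
  · intro k
    obtain ⟨r, hr⟩ : ∃ r, m = r + 1 := ⟨m - 1, by omega⟩
    have hb : ∀ t < k, totalDegree (bind₁ (Fk F t) G) ≤ d * (1 + d * k) ^ r := by
      intro t ht
      apply totalDegree_bind_le
      intro e he
      calc ∑ l, e l * totalDegree (Fk F t l) ≤ ∑ l, e l * (1 + d * k) ^ r := by
            apply Finset.sum_le_sum; intro l _
            by_cases hl : i < l
            · apply Nat.mul_le_mul_left
              refine (totalDegree_Fk hF hs d hdeg t l).trans ?_
              calc _ ≤ (1 + d * k) ^ (m - (l : ℕ)) := by gcongr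
                _ ≤ _ := Nat.pow_le_pow_right (by omega) (by rw [Fin.lt_def] at hl; omega)
            · rw [support_zero_of_vars (fun hc => hl (hd.vG l hc)) he]; simp
        _ = (∑ l, e l) * (1 + d * k) ^ r := by rw [Finset.sum_mul]
        _ ≤ _ := Nat.mul_le_mul_right _ (totalDegree_G i i' d hdeg hd e he)
    calc totalDegree (P k) ≤ ∑ t ∈ range k, totalDegree (bind₁ (Fk F t) G) :=
          totalDegree_finsetProd _ _
      _ ≤ ∑ t ∈ range k, d * (1 + d * k) ^ r :=
          Finset.sum_le_sum fun t ht => hb t (mem_range.1 ht)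
      _ = (d * k) * (1 + d * k) ^ r := by simp; ring
      _ ≤ (1 + d * k) * (1 + d * k) ^ r := by gcongr; omega
      _ = _ := by rw [hr]; ring

local notation "χ" => (ZMod.stdAddChar : AddChar (ZMod _) ℂ)

lemma card_zeros_le (Q : MvPolynomial (Fin (m+1)) (ZMod p)) (hQ : Q ≠ 0) (D : ℕ)
    (hD : Q.totalDegree ≤ D) :
    (((univ : Finset (Fin (m+1) → ZMod p)).filter (fun w => eval w Q = 0)).card : ℝ) ≤ D * (p : ℝ) ^ m := by
  classical
  have h := schwartz_zippel_totalDegree hQ (univ : Finset (ZMod p))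
  have hpp : p.Prime := Fact.out
  have hp0 : (0 : ℚ≥0) < p := by exact_mod_cast hpp.pos
  rw [Finset.card_univ, ZMod.card, Fintype.piFinset_univ, div_le_div_iff₀ (by positivity) hp0] at h
  have h2 : (((univ : Finset (Fin (m+1) → ZMod p)).filter (fun w => eval w Q = 0)).card) * p
      ≤ Q.totalDegree * p ^ (m+1) := by exact_mod_cast h
  rw [pow_succ, ← mul_assoc] at h2
  have h3 := Nat.le_of_mul_le_mul_right h2 hpp.pos
  have h4 := h3.trans (Nat.mul_le_mul_right _ hD)
  exact_mod_cast h4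

/-- complete sums over all initial vectors -/
lemma complete_sum {s : ℕ → ℕ → ℕ} {F : Fin (m+1) → MvPolynomial (Fin (m+1)) (ZMod p)}
    (hF : IsFSystem m s F) (hs : ∀ i < m, s i (i+1) ≠ 0) (d : ℕ)
    (hdeg : ∀ j, (F j).totalDegree ≤ d) (i : Fin (m+1)) (hi : (i : ℕ) < m)
    (a : Fin (m+1) → ZMod p) (hai : a i ≠ 0) (ha : ∀ j < i, a j = 0)
    (K : ℕ) (c : ℕ → ZMod p) (hc : ∃ k < K, c k ≠ 0) :
    ‖∑ w : Fin (m+1) → ZMod p, χ (∑ k ∈ range K, c k * ∑ j, a j * ((Phi F)^[k] w) j)‖ ≤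
      ((1 + d * K) ^ m : ℕ) * (p : ℝ) ^ m := by
  classical
  obtain ⟨P, h1, h2, h3, h4⟩ := exists_P hF hs d hdeg i hi
  have hpp : p.Prime := Fact.out
  set f : (Fin (m+1) → ZMod p) → ℂ :=
    fun w => χ (∑ k ∈ range K, c k * ∑ j, a j * ((Phi F)^[k] w) j) with hf
  set Γ := ∑ k ∈ range K, C (c k) * P k with hΓ
  have hft : ∀ w t, f (w + Pi.single i t) = f w * χ (t * (a i * eval w Γ)) := by
    intro w t
    rw [hf]
    simp only
    rw [← AddChar.map_add_eq_mul]
    congr 1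
    have e1 : ∀ k, ∑ j, a j * ((Phi F)^[k] (w + Pi.single i t)) j =
        (∑ j, a j * ((Phi F)^[k] w) j) + t * a i * eval w (P k) := by
      intro k
      have : ∀ j, a j * ((Phi F)^[k] (w + Pi.single i t)) j =
          a j * ((Phi F)^[k] w) j + (if j = i then t * a i * eval w (P k) else 0) := by
        intro j
        rcases lt_trichotomy j i with h | h | h
        · rw [ha j h, if_neg h.ne]; simp
        · subst h; rw [h1, if_pos rfl]; ring
        · rw [h2 _ _ _ _ h, if_neg h.ne', add_zero]
      rw [Finset.sum_congr rfl fun j _ => this j, Finset.sum_add_distrib]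
      simp
    rw [Finset.sum_congr rfl fun k _ => by rw [e1 k, mul_add], Finset.sum_add_distrib, hΓ, map_sum,
      Finset.mul_sum, Finset.mul_sum]
    congr 1
    apply Finset.sum_congr rfl; intro k _
    rw [map_mul, eval_C]; ring
  have hsum : (p : ℂ) * ∑ w, f w = ∑ w, f w * (if a i * eval w Γ = 0 then (p : ℂ) else 0) := by
    have e2 : ∀ t : ZMod p, ∑ w, f w = ∑ w, f w * χ (t * (a i * eval w Γ)) := by
      intro t
      rw [← Equiv.sum_comp (Equiv.addRight (Pi.single i t : Fin (m+1) → ZMod p)) f]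
      exact Finset.sum_congr rfl fun w _ => hft w t
    calc (p : ℂ) * ∑ w, f w = ∑ t : ZMod p, ∑ w, f w := by simp
      _ = ∑ t : ZMod p, ∑ w, f w * χ (t * (a i * eval w Γ)) :=
        Finset.sum_congr rfl fun t _ => e2 t
      _ = _ := by
        rw [Finset.sum_comm]
        apply Finset.sum_congr rfl; intro w _
        rw [← Finset.mul_sum, chi_sum]
  have hp0 : (p : ℂ) ≠ 0 := by exact_mod_cast hpp.ne_zero
  have hsum2 : ∑ w, f w = ∑ w ∈ univ.filter (fun w => eval w Γ = 0), f w := by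
    apply mul_left_cancel₀ hp0
    rw [hsum, Finset.sum_filter, Finset.mul_sum]
    apply Finset.sum_congr rfl; intro w _
    by_cases hw : eval w Γ = 0
    · simp [hw, mul_comm]
    · simp [hw, hai]
  change ‖∑ w, f w‖ ≤ _
  rw [hsum2]
  calc _ ≤ ∑ w ∈ univ.filter (fun w => eval w Γ = 0), ‖f w‖ := norm_sum_le _ _
    _ = ((univ.filter (fun w => eval w Γ = 0)).card : ℝ) := by
        rw [Finset.sum_congr rfl fun w _ => chi_norm _]; simp
    _ ≤ _ := by
      apply card_zeros_le _ (h3 K c hc)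
      refine totalDegree_finsetSum_le fun k hk => ?_
      refine (totalDegree_mul _ _).trans ?_
      rw [totalDegree_C, zero_add]
      refine (h4 k).trans ?_
      have := (mem_range.1 hk).le
      gcongr

end FSys2

section Moment
open Finset

variable {p : ℕ} [Fact p.Prime]
local notation "χ" => (ZMod.stdAddChar : AddChar (ZMod _) ℂ)

/-- multiplicities -/
def cnt {ν K : ℕ} (κ : Fin ν → Fin K) (k : ℕ) : ℕ := (univ.filter (fun j => (κ j : ℕ) = k)).card

lemma cnt_sum {ν K : ℕ} (κ : Fin ν → Fin K) (θ : ℕ → ZMod p) :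
    ∑ j, θ (κ j) = ∑ k ∈ range K, (cnt κ k : ZMod p) * θ k := by
  have h : ∀ k, (cnt κ k : ZMod p) * θ k = ∑ j, if (κ j : ℕ) = k then θ k else 0 := by
    intro k
    rw [cnt, ← Finset.sum_filter, Finset.sum_const, nsmul_eq_mul]
  rw [Finset.sum_congr rfl fun k _ => h k, Finset.sum_comm]
  apply Finset.sum_congr rfl; intro j _
  rw [Finset.sum_ite_eq (range K) (κ j : ℕ) θ, if_pos (mem_range.2 (κ j).2)]

lemma bad_card (ν K : ℕ) (hν : ν < p) :
    ((univ : Finset ((Fin ν → Fin K) × (Fin ν → Fin K))).filter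
      (fun q => ∀ k < K, (cnt q.1 k : ZMod p) - cnt q.2 k = 0)).card ≤ K ^ ν * ν ^ ν := by
  classical
  have hsub : ((univ : Finset ((Fin ν → Fin K) × (Fin ν → Fin K))).filter
      (fun q => ∀ k < K, (cnt q.1 k : ZMod p) - cnt q.2 k = 0)) ⊆
      (univ : Finset ((Fin ν → Fin K) × (Fin ν → Fin ν))).image (fun q => (q.1, q.1 ∘ q.2)) := by
    intro q hq
    have hq' := (Finset.mem_filter.1 hq).2
    have hle : ∀ (κ : Fin ν → Fin K) k, cnt κ k < p := fun κ k =>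
      lt_of_le_of_lt ((Finset.card_le_univ _).trans (by simp)) hν
    have hex : ∀ j, ∃ j', q.1 j' = q.2 j := by
      intro j
      have h1 := hq' (q.2 j) (q.2 j).2
      rw [sub_eq_zero, ZMod.natCast_eq_natCast_iff', Nat.mod_eq_of_lt (hle _ _),
        Nat.mod_eq_of_lt (hle _ _)] at h1
      have h2 : 0 < cnt q.2 (q.2 j) := Finset.card_pos.2 ⟨j, by simp⟩
      rw [← h1] at h2
      obtain ⟨j', hj'⟩ := Finset.card_pos.1 h2
      exact ⟨j', Fin.ext (Finset.mem_filter.1 hj').2⟩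
    choose f hf using hex
    refine Finset.mem_image.2 ⟨(q.1, f), mem_univ _, ?_⟩
    exact Prod.ext rfl (funext hf)
  refine (Finset.card_le_card hsub).trans (Finset.card_image_le.trans ?_)
  rw [Finset.card_univ, Fintype.card_prod]
  simp

lemma chi_map_sum {ι : Type*} (S : Finset ι) (f : ι → ZMod p) : χ (∑ j ∈ S, f j) = ∏ j ∈ S, χ (f j) := by
  classical
  induction S using Finset.induction_on with
  | empty => simp
  | insert a S ha ih => rw [Finset.sum_insert ha, Finset.prod_insert ha, AddChar.map_add_eq_mul, ih]

lemma moment {W : Type*} [Fintype W] (Θ : W → ℕ → ZMod p) (K ν : ℕ) (hν : ν < p) (B : ℝ) (hB0 : 0 ≤ B)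
    (hB : ∀ c : ℕ → ZMod p, (∃ k < K, c k ≠ 0) → ‖∑ w, χ (∑ k ∈ range K, c k * Θ w k)‖ ≤ B) :
    ∑ w, ‖∑ k ∈ range K, χ (Θ w k)‖ ^ (2 * ν) ≤
      (K : ℝ) ^ ν * (ν : ℝ) ^ ν * Fintype.card W + (K : ℝ) ^ (2 * ν) * B := by
  classical
  let cc : (Fin ν → Fin K) × (Fin ν → Fin K) → ℕ → ZMod p := fun q k => (cnt q.1 k : ZMod p) - cnt q.2 k
  have h1 : ∀ w, ((‖∑ k ∈ range K, χ (Θ w k)‖ ^ (2 * ν) : ℝ) : ℂ) =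
      ∑ q : (Fin ν → Fin K) × (Fin ν → Fin K), χ (∑ k ∈ range K, cc q k * Θ w k) := by
    intro w
    rw [pow_mul]
    push_cast
    rw [← Complex.mul_conj', mul_pow, ← map_pow, Finset.sum_range, Fintype.sum_pow, map_sum,
      Finset.sum_mul_sum, ← Finset.sum_product', Finset.univ_product_univ]
    apply Finset.sum_congr rfl; intro q _
    rw [← chi_map_sum, ← chi_map_sum, chi_conj, ← AddChar.map_add_eq_mul,
      cnt_sum, cnt_sum, ← sub_eq_add_neg, ← Finset.sum_sub_distrib]
    congr 1
    apply Finset.sum_congr rfl; intro k _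
    simp only [cc]; ring
  have h2 : ((∑ w, ‖∑ k ∈ range K, χ (Θ w k)‖ ^ (2 * ν) : ℝ) : ℂ) =
      ∑ q : (Fin ν → Fin K) × (Fin ν → Fin K), ∑ w, χ (∑ k ∈ range K, cc q k * Θ w k) := by
    rw [Complex.ofReal_sum, Finset.sum_congr rfl fun w _ => h1 w, Finset.sum_comm]
  have h3 : ∑ w, ‖∑ k ∈ range K, χ (Θ w k)‖ ^ (2 * ν) ≤
      ∑ q : (Fin ν → Fin K) × (Fin ν → Fin K), ‖∑ w, χ (∑ k ∈ range K, cc q k * Θ w k)‖ := by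
    have : 0 ≤ ∑ w, ‖∑ k ∈ range K, χ (Θ w k)‖ ^ (2 * ν) := Finset.sum_nonneg fun _ _ => by positivity
    rw [← Real.norm_of_nonneg this, ← Complex.norm_real, h2]
    exact norm_sum_le _ _
  refine h3.trans ?_
  have h4 : ∀ q, ‖∑ w, χ (∑ k ∈ range K, cc q k * Θ w k)‖ ≤
      (if ∀ k < K, cc q k = 0 then (Fintype.card W : ℝ) else 0) + B := by
    intro q
    by_cases hq : ∀ k < K, cc q k = 0
    · rw [if_pos hq]
      refine (norm_sum_le _ _).trans ?_
      rw [Finset.sum_congr rfl fun w _ => chi_norm _]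
      simp [hB0]
    · rw [if_neg hq, zero_add]
      push Not at hq
      exact hB _ hq
  refine (Finset.sum_le_sum fun q _ => h4 q).trans ?_
  rw [Finset.sum_add_distrib, ← Finset.sum_filter, Finset.sum_const, Finset.sum_const, nsmul_eq_mul,
    nsmul_eq_mul]
  have h5 := bad_card (p := p) ν K hν
  have h6 : (((univ : Finset ((Fin ν → Fin K) × (Fin ν → Fin K))).filter
      (fun q => ∀ k < K, cc q k = 0)).card : ℝ) ≤ (K : ℝ) ^ ν * (ν : ℝ) ^ ν := by
    have h5' := (Nat.cast_le (α := ℝ)).2 h5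
    rw [Nat.cast_mul, Nat.cast_pow, Nat.cast_pow] at h5'
    exact h5'
  have h7 : ((univ : Finset ((Fin ν → Fin K) × (Fin ν → Fin K))).card : ℝ) = (K : ℝ) ^ (2 * ν) := by
    rw [Finset.card_univ, Fintype.card_prod]; simp; ring
  rw [h7]
  gcongr

/-- averaging over shifts -/
lemma shift_avg (z : ℕ → ℂ) (hz : ∀ n, ‖z n‖ ≤ 1) (N K : ℕ) :
    K * ‖∑ n ∈ range N, z n‖ ≤ (∑ n ∈ range N, ‖∑ k ∈ range K, z (n + k)‖) + 2 * K ^ 2 := by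
  have h1 : ∀ k, ‖∑ n ∈ range N, z n - ∑ n ∈ range N, z (n + k)‖ ≤ 2 * k := by
    intro k
    induction k with
    | zero => simp
    | succ k ih =>
      have e : ∑ n ∈ range N, z n - ∑ n ∈ range N, z (n + (k+1)) =
          (∑ n ∈ range N, z n - ∑ n ∈ range N, z (n + k)) + (z k - z (N + k)) := by
        have h := Finset.sum_range_succ (fun n => z (n + k)) N
        have h' := Finset.sum_range_succ' (fun n => z (n + k)) N
        rw [h] at h'
        simp only [zero_add] at h'
        have e2 : ∑ n ∈ range N, z (n + 1 + k) = ∑ n ∈ range N, z (n + (k + 1)) := by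
          apply Finset.sum_congr rfl; intro n _; congr 1; ring
        rw [e2] at h'
        linear_combination h'
      rw [e]
      refine (norm_add_le _ _).trans ?_
      have := norm_sub_le (z k) (z (N + k))
      have := hz k; have := hz (N + k)
      push_cast; linarith
  have h2 : (K : ℂ) * ∑ n ∈ range N, z n = (∑ n ∈ range N, ∑ k ∈ range K, z (n + k)) +
      ∑ k ∈ range K, (∑ n ∈ range N, z n - ∑ n ∈ range N, z (n + k)) := by
    rw [Finset.sum_sub_distrib, Finset.sum_comm]; simp
  have h3 : (K : ℝ) * ‖∑ n ∈ range N, z n‖ = ‖(K : ℂ) * ∑ n ∈ range N, z n‖ := by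
    rw [norm_mul]; simp
  rw [h3, h2]
  refine (norm_add_le _ _).trans (add_le_add (norm_sum_le _ _) ?_)
  refine (norm_sum_le _ _).trans ?_
  calc _ ≤ ∑ k ∈ range K, (2 * K : ℝ) := by
        apply Finset.sum_le_sum; intro k hk
        refine (h1 k).trans ?_
        have : (k : ℝ) ≤ K := by exact_mod_cast (mem_range.1 hk).le
        linarith
    _ = _ := by simp; ring
end Moment

section NonLin
open Finset

local notation "χ" => (ZMod.stdAddChar : AddChar (ZMod _) ℂ)

set_option maxHeartbeats 1000000 in
theorem nonlin_sum (m d : ℕ) (hm : 1 ≤ m) (ε : ℝ) (hε : 0 < ε) :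
    ∃ γ : ℝ, 0 < γ ∧ ∃ C : ℝ, 0 < C ∧ ∃ P₀ : ℝ, ∀ (p : ℕ) [Fact p.Prime], P₀ ≤ p →
    ∀ (s : ℕ → ℕ → ℕ) (F : Fin (m+1) → MvPolynomial (Fin (m+1)) (ZMod p)), IsFSystem m s F →
    (∀ i < m, s i (i+1) ≠ 0) → (∀ j, (F j).totalDegree ≤ d) →
    ∀ (u : ℕ → Fin (m+1) → ZMod p), (∀ n i, u (n+1) i = eval (u n) (F i)) →
    ∀ N : ℕ, Set.InjOn u (range N) → (p : ℝ) ^ ((m : ℝ) + ε) ≤ N →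
    ∀ (i : Fin (m+1)), (i : ℕ) < m → ∀ a : Fin (m+1) → ZMod p, a i ≠ 0 → (∀ j < i, a j = 0) →
    ‖∑ n ∈ range N, χ (∑ j, a j * u n j)‖ ≤ N * (C * (p : ℝ) ^ (-γ)) := by
  have hm0 : (0 : ℝ) < m := by exact_mod_cast hm
  set η : ℝ := ε / (2 * m) with hη
  have hη0 : 0 < η := by positivity
  obtain ⟨ν, hν⟩ := exists_nat_gt (1 / η)
  have hν0 : (0 : ℝ) < ν := lt_trans (by positivity) hν
  have hν1 : 1 ≤ ν := by exact_mod_cast hν0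
  have hην : 1 ≤ η * ν := by
    rw [div_lt_iff₀ hη0] at hν; linarith
  set C₀ : ℝ := (2 * ν) ^ ν + (1 + d) ^ m with hC₀
  have hC₀1 : 1 ≤ C₀ := by
    have h1 : (1 : ℝ) ≤ (1 + d) ^ m := one_le_pow₀ (by have : (0:ℝ) ≤ d := Nat.cast_nonneg _; linarith)
    have h2 : (0 : ℝ) ≤ (2 * ν) ^ ν := by positivity
    linarith
  set γ : ℝ := ε / (4 * ν) with hγ
  refine ⟨γ, by positivity, C₀ + 2, by linarith, ν + 1, ?_⟩
  intro p _ hp s F hF hs hdeg u hu N hinj hN i hi a hai ha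
  have hpp : p.Prime := Fact.out
  have hp1 : (1 : ℝ) < p := by exact_mod_cast hpp.one_lt
  have hp0 : (0 : ℝ) < p := by linarith
  have hνp : ν < p := by
    have : (ν : ℝ) < p := by linarith
    exact_mod_cast this
  set x : ℝ := (p : ℝ) ^ η with hx
  have hx1 : 1 ≤ x := Real.one_le_rpow hp1.le hη0.le
  set K := ⌊x⌋₊ with hK
  have hKx : (K : ℝ) ≤ x := Nat.floor_le (by linarith)
  have hK1 : 1 ≤ K := Nat.one_le_floor_iff x |>.2 hx1
  have hK1' : (1 : ℝ) ≤ K := by exact_mod_cast hK1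
  have hK2 : x ≤ 2 * K := by
    have := (Nat.lt_floor_add_one x).le
    linarith
  have hN0 : (0 : ℝ) < N := lt_of_lt_of_le (by positivity) hN
  set θ : (Fin (m+1) → ZMod p) → ℕ → ZMod p := fun w k => ∑ j, a j * ((Phi F)^[k] w) j with hθ
  set B : ℝ := ((1 + d * K) ^ m : ℕ) * (p : ℝ) ^ m with hB
  have hmom := moment θ K ν hνp B (by positivity) (fun c hc =>
    complete_sum hF hs d hdeg i hi a hai ha K c hc)
  have hcard : (Fintype.card (Fin (m+1) → ZMod p) : ℝ) = (p : ℝ) ^ (m + 1) := by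
    simp [ZMod.card]
  rw [hcard] at hmom
  have hiter : ∀ n k, u (n + k) = (Phi F)^[k] (u n) := by
    intro n k
    induction k with
    | zero => rfl
    | succ k ih =>
      rw [Function.iterate_succ_apply', ← ih]
      funext j; exact hu (n + k) j
  set z : ℕ → ℂ := fun n => χ (∑ j, a j * u n j) with hz
  have hzk : ∀ n k, z (n + k) = χ (θ (u n) k) := by
    intro n k
    simp only [hz, hθ, hiter n k]
  set T : ℕ → ℝ := fun n => ‖∑ k ∈ range K, z (n + k)‖ with hT
  have hTM : ∑ n ∈ range N, T n ^ (2 * ν) ≤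
      (K : ℝ) ^ ν * (ν : ℝ) ^ ν * (p : ℝ) ^ (m + 1) + (K : ℝ) ^ (2 * ν) * B := by
    refine le_trans ?_ hmom
    classical
    have : ∑ n ∈ range N, T n ^ (2 * ν) =
        ∑ w ∈ (range N).image u, ‖∑ k ∈ range K, χ (θ w k)‖ ^ (2 * ν) := by
      rw [Finset.sum_image hinj]
      apply Finset.sum_congr rfl; intro n _
      simp only [hT, hzk]
    rw [this]
    exact Finset.sum_le_sum_of_subset_of_nonneg (Finset.subset_univ _) (fun _ _ _ => by positivity)
  have hM : (K : ℝ) ^ ν * (ν : ℝ) ^ ν * (p : ℝ) ^ (m + 1) + (K : ℝ) ^ (2 * ν) * B ≤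
      N * (K : ℝ) ^ (2 * ν) * (C₀ * (p : ℝ) ^ (-(ε / 2))) := by
    have hpm : (p : ℝ) ^ m * (p : ℝ) ^ ε ≤ N := by
      rw [← Real.rpow_natCast, ← Real.rpow_add hp0]; exact hN
    have hpe : (p : ℝ) ^ ε * (p : ℝ) ^ (-(ε/2)) = (p : ℝ) ^ (ε/2) := by
      rw [← Real.rpow_add hp0]; congr 1; ring
    have hpe1 : 1 ≤ (p : ℝ) ^ (ε/2) := Real.one_le_rpow hp1.le (by positivity)
    have hNq : (p : ℝ) ^ m * (p : ℝ) ^ (ε / 2) ≤ N * (p : ℝ) ^ (-(ε/2)) := by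
      calc (p : ℝ) ^ m * (p : ℝ) ^ (ε / 2) = (p : ℝ) ^ m * (p : ℝ) ^ ε * (p : ℝ) ^ (-(ε/2)) := by
            rw [mul_assoc, hpe]
        _ ≤ _ := by gcongr
    have hA : (K : ℝ) ^ ν * (ν : ℝ) ^ ν * (p : ℝ) ^ (m + 1) ≤
        N * (K : ℝ) ^ (2 * ν) * ((2 * ν) ^ ν * (p : ℝ) ^ (-(ε / 2))) := by
      have h1 : (p : ℝ) ≤ (2 * K) ^ ν := by
        calc (p : ℝ) = (p : ℝ) ^ (1 : ℝ) := by simp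
          _ ≤ (p : ℝ) ^ (η * ν) := Real.rpow_le_rpow_of_exponent_le hp1.le hην
          _ = x ^ ν := by rw [Real.rpow_mul hp0.le, Real.rpow_natCast]
          _ ≤ _ := by gcongr
      have h2 : (p : ℝ) ^ m ≤ N * (p : ℝ) ^ (-(ε/2)) := by
        refine le_trans ?_ hNq
        exact le_mul_of_one_le_right (by positivity) hpe1
      calc (K : ℝ) ^ ν * (ν : ℝ) ^ ν * (p : ℝ) ^ (m + 1)
          = (K : ℝ) ^ ν * (ν : ℝ) ^ ν * ((p : ℝ) ^ m * p) := by rw [pow_succ]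
        _ ≤ (K : ℝ) ^ ν * (ν : ℝ) ^ ν * ((N * (p : ℝ) ^ (-(ε/2))) * (2 * K) ^ ν) := by gcongr
        _ = _ := by rw [two_mul ν, pow_add, mul_pow, mul_pow]; ring
    have hBb : (K : ℝ) ^ (2 * ν) * B ≤
        N * (K : ℝ) ^ (2 * ν) * ((1 + d) ^ m * (p : ℝ) ^ (-(ε / 2))) := by
      have h1 : (((1 + d * K) ^ m : ℕ) : ℝ) ≤ (1 + d) ^ m * (p : ℝ) ^ (ε / 2) := by
        push_cast
        have e1 : (p : ℝ) ^ (ε / 2) = x ^ m := by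
          rw [hx, ← Real.rpow_natCast, ← Real.rpow_mul hp0.le, hη]
          congr 1; field_simp
        rw [e1, ← mul_pow]
        have : (d : ℝ) * K ≤ d * x := by gcongr
        gcongr
        nlinarith
      calc (K : ℝ) ^ (2 * ν) * B ≤ (K : ℝ) ^ (2 * ν) * (((1 + d) ^ m * (p : ℝ) ^ (ε / 2)) * (p : ℝ) ^ m) := by
            rw [hB]; gcongr
        _ = (K : ℝ) ^ (2 * ν) * ((1 + d) ^ m * ((p : ℝ) ^ m * (p : ℝ) ^ (ε / 2))) := by ring
        _ ≤ (K : ℝ) ^ (2 * ν) * ((1 + d) ^ m * (N * (p : ℝ) ^ (-(ε/2)))) := by gcongr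
        _ = _ := by ring
    calc _ ≤ N * (K : ℝ) ^ (2 * ν) * ((2 * ν) ^ ν * (p : ℝ) ^ (-(ε / 2))) +
        N * (K : ℝ) ^ (2 * ν) * ((1 + d) ^ m * (p : ℝ) ^ (-(ε / 2))) := add_le_add hA hBb
      _ = _ := by rw [hC₀]; ring
  have hT0 : 0 ≤ ∑ n ∈ range N, T n := Finset.sum_nonneg fun _ _ => norm_nonneg _
  have hsumT : ∑ n ∈ range N, T n ≤ N * K * (C₀ * (p : ℝ) ^ (-γ)) := by
    have hpow : (∑ n ∈ range N, T n) ^ (2 * ν) ≤ (N * K * (C₀ * (p : ℝ) ^ (-γ))) ^ (2 * ν) := by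
      obtain ⟨r, hr⟩ : ∃ r, 2 * ν = r + 1 := ⟨2 * ν - 1, by omega⟩
      have h1 : (∑ n ∈ range N, T n) ^ (2 * ν) ≤ (N : ℝ) ^ r * ∑ n ∈ range N, T n ^ (2 * ν) := by
        rw [hr]
        have := pow_sum_div_card_le_sum_pow (s := range N) (f := T) (fun _ _ => norm_nonneg _) r
        rw [card_range, div_le_iff₀ (by positivity)] at this
        linarith
      have h2 : (C₀ * (p : ℝ) ^ (-γ)) ^ (2 * ν) = C₀ ^ (2 * ν) * (p : ℝ) ^ (-(ε / 2)) := by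
        rw [mul_pow, ← Real.rpow_natCast ((p : ℝ) ^ (-γ)), ← Real.rpow_mul hp0.le]
        congr 2; rw [hγ]; push_cast; field_simp; ring
      have h3 : C₀ ≤ C₀ ^ (2 * ν) := le_self_pow₀ hC₀1 (by omega)
      calc _ ≤ (N : ℝ) ^ r * ∑ n ∈ range N, T n ^ (2 * ν) := h1
        _ ≤ (N : ℝ) ^ r * (N * (K : ℝ) ^ (2 * ν) * (C₀ * (p : ℝ) ^ (-(ε / 2)))) := by
            gcongr; exact hTM.trans hM
        _ ≤ (N : ℝ) ^ r * (N * (K : ℝ) ^ (2 * ν) * (C₀ ^ (2 * ν) * (p : ℝ) ^ (-(ε / 2)))) := by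
            gcongr
        _ = ((N : ℝ) ^ (2 * ν) * (K : ℝ) ^ (2 * ν)) * (C₀ * (p : ℝ) ^ (-γ)) ^ (2 * ν) := by
            rw [h2, show (N : ℝ) ^ (2 * ν) = N ^ r * N by rw [hr, pow_succ]]; ring
        _ = _ := by rw [mul_pow (_ * _ : ℝ) (_ * _ : ℝ), mul_pow (N : ℝ)]
    exact (pow_le_pow_iff_left₀ hT0 (by positivity) (by omega)).1 hpow
  have hav := shift_avg z (fun n => (chi_norm _).le) N K
  have hKpos : (0 : ℝ) < K := by linarith
  have hfin : ‖∑ n ∈ range N, z n‖ ≤ N * (C₀ * (p : ℝ) ^ (-γ)) + 2 * K := by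
    have : (K : ℝ) * ‖∑ n ∈ range N, z n‖ ≤ K * (N * (C₀ * (p : ℝ) ^ (-γ)) + 2 * K) := by
      refine hav.trans ?_
      have : ∑ n ∈ range N, ‖∑ k ∈ range K, z (n + k)‖ ≤ N * K * (C₀ * (p : ℝ) ^ (-γ)) := hsumT
      have e : (K : ℝ) * (N * (C₀ * (p : ℝ) ^ (-γ)) + 2 * K) =
          N * K * (C₀ * (p : ℝ) ^ (-γ)) + 2 * K ^ 2 := by ring
      rw [e]; linarith
    exact le_of_mul_le_mul_left this hKpos
  have hKN : (K : ℝ) ≤ N * (p : ℝ) ^ (-γ) := by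
    have hm1 : (1 : ℝ) ≤ m := by exact_mod_cast hm
    have hν1' : (1 : ℝ) ≤ ν := by exact_mod_cast hν1
    have e1 : η ≤ ε / 2 := by
      rw [hη, div_le_div_iff₀ (by positivity) (by norm_num)]
      nlinarith
    have e2 : γ ≤ ε / 2 := by
      rw [hγ, div_le_div_iff₀ (by positivity) (by norm_num)]
      nlinarith
    calc (K : ℝ) ≤ x := hKx
      _ ≤ (p : ℝ) ^ (((m : ℝ) + ε) + -γ) := Real.rpow_le_rpow_of_exponent_le hp1.le (by linarith)
      _ = (p : ℝ) ^ ((m : ℝ) + ε) * (p : ℝ) ^ (-γ) := Real.rpow_add hp0 _ _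
      _ ≤ _ := by gcongr
  calc _ ≤ (N : ℝ) * (C₀ * (p : ℝ) ^ (-γ)) + 2 * K := hfin
    _ ≤ (N : ℝ) * (C₀ * (p : ℝ) ^ (-γ)) + 2 * (N * (p : ℝ) ^ (-γ)) := by gcongr
    _ = _ := by ring
end NonLin

section Discrep
open Finset

variable {p : ℕ} [Fact p.Prime]
local notation "χ" => (ZMod.stdAddChar : AddChar (ZMod _) ℂ)

lemma sum_zmod_val {M : Type*} [AddCommMonoid M] (g : ℕ → M) :
    ∑ a : ZMod p, g a.val = ∑ r ∈ range p, g r := by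
  apply Finset.sum_bij' (fun (a : ZMod p) _ => a.val) (fun (r : ℕ) _ => (r : ZMod p))
  · intro a _; exact mem_range.2 (ZMod.val_lt a)
  · intro r _; exact mem_univ _
  · intro a _; simp
  · intro r hr; exact ZMod.val_cast_of_lt (mem_range.1 hr)
  · intro a _; rfl

lemma abs_prod_sub_prod {ι : Type*} (S : Finset ι) (x y : ι → ℝ) (hx : ∀ i, 0 ≤ x i ∧ x i ≤ 1)
    (hy : ∀ i, 0 ≤ y i ∧ y i ≤ 1) (δ : ℝ) (h : ∀ i, |x i - y i| ≤ δ) :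
    |∏ i ∈ S, x i - ∏ i ∈ S, y i| ≤ S.card * δ := by
  classical
  induction S using Finset.induction_on with
  | empty => simp
  | insert a S ha ih =>
    rw [Finset.prod_insert ha, Finset.prod_insert ha, Finset.card_insert_of_notMem ha]
    have e : x a * ∏ i ∈ S, x i - y a * ∏ i ∈ S, y i =
        x a * (∏ i ∈ S, x i - ∏ i ∈ S, y i) + (x a - y a) * ∏ i ∈ S, y i := by ring
    rw [e]
    refine (abs_add_le _ _).trans ?_
    rw [abs_mul, abs_mul]
    have h1 : |x a| ≤ 1 := by rw [abs_of_nonneg (hx a).1]; exact (hx a).2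
    have h2 : |∏ i ∈ S, y i| ≤ 1 := by
      rw [abs_of_nonneg (Finset.prod_nonneg fun i _ => (hy i).1)]
      exact Finset.prod_le_one (fun i _ => (hy i).1) (fun i _ => (hy i).2)
    have h3 : |x a| * |∏ i ∈ S, x i - ∏ i ∈ S, y i| ≤ S.card * δ :=
      (mul_le_of_le_one_left (abs_nonneg _) h1).trans ih
    have h4 : |x a - y a| * |∏ i ∈ S, y i| ≤ δ :=
      (mul_le_of_le_one_right (abs_nonneg _) h2).trans (h a)
    push_cast; linarith

lemma chi_sub_one_inv (a : ZMod p) (ha : a ≠ 0) :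
    2 / ‖χ a - 1‖ ≤ p * ((1 / 2) * (1 / (a.val : ℝ) + 1 / ((p : ℝ) - a.val))) ∧ χ a ≠ 1 := by
  have hpp : p.Prime := Fact.out
  have hp0 : (0 : ℝ) < p := by exact_mod_cast hpp.pos
  set r := a.val with hr
  have hr0 : (0 : ℝ) < r := by
    have : 0 < r := Nat.pos_of_ne_zero (fun h => ha ((ZMod.val_eq_zero a).1 h))
    exact_mod_cast this
  have hrp : (r : ℝ) < p := by exact_mod_cast ZMod.val_lt a
  have e1 : ‖χ a - 1‖ = 2 * |Real.sin (Real.pi * r / p)| := by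
    have : χ a = Complex.exp (Complex.I * ((2 * Real.pi * r / p : ℝ) : ℂ)) := by
      have h := ZMod.stdAddChar_coe (N := p) (r : ℤ)
      rw [show (((r : ℤ)) : ZMod p) = a by rw [hr]; simp] at h
      rw [h]; congr 1; push_cast; ring
    rw [this, Complex.norm_exp_I_mul_ofReal_sub_one, Real.norm_eq_abs, abs_mul,
      abs_of_pos (by norm_num : (0:ℝ) < 2)]
    congr 3; ring
  have hs0 : ∀ x : ℝ, 0 < x → x ≤ p / 2 → 2 * x / p ≤ Real.sin (Real.pi * x / p) := by
    intro x hx hxp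
    have := Real.mul_le_sin (x := Real.pi * x / p) (by positivity) (by
      rw [div_le_div_iff₀ hp0 (by norm_num)]
      have := Real.pi_pos; nlinarith)
    refine le_trans (le_of_eq ?_) this
    field_simp
  have key : ∃ x : ℝ, 0 < x ∧ 2 * x / p ≤ |Real.sin (Real.pi * r / p)| ∧
      1 / x ≤ 1 / (r : ℝ) + 1 / ((p : ℝ) - r) := by
    have q1 : 0 < 1 / (r : ℝ) := by positivity
    have q2 : 0 < 1 / ((p : ℝ) - r) := by
      have : 0 < (p : ℝ) - r := by linarith
      positivity
    rcases le_or_gt (r : ℝ) (p / 2) with h | h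
    · exact ⟨r, hr0, (hs0 r hr0 h).trans (le_abs_self _), by linarith⟩
    · refine ⟨p - r, by linarith, ?_, by linarith⟩
      have h1 := hs0 (p - r) (by linarith) (by linarith)
      have h2 : Real.pi * (p - r) / p = Real.pi - Real.pi * r / p := by field_simp
      rw [h2, Real.sin_pi_sub] at h1
      exact h1.trans (le_abs_self _)
  obtain ⟨x, hx0, hx1, hx2⟩ := key
  have hpos : 0 < 2 * x / p := by positivity
  have hn : 2 * (2 * x / p) ≤ ‖χ a - 1‖ := by rw [e1]; linarith
  constructor
  · calc 2 / ‖χ a - 1‖ ≤ 2 / (2 * (2 * x / p)) := by gcongr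
      _ = p * ((1 / 2) * (1 / x)) := by field_simp
      _ ≤ _ := by gcongr
  · intro hc
    rw [hc, sub_self, norm_zero] at hn
    linarith

lemma harmonic_bound : ∑ r ∈ range p, (1 / 2) * (1 / (r : ℝ) + 1 / ((p : ℝ) - r)) ≤ 1 + Real.log p := by
  have hpp : p.Prime := Fact.out
  have hH : ((harmonic p : ℚ) : ℝ) = ∑ i ∈ range p, 1 / ((i : ℝ) + 1) := by
    rw [harmonic]; push_cast; simp
  have h1 : ∑ r ∈ range p, 1 / ((p : ℝ) - r) = harmonic p := by
    rw [hH, ← Finset.sum_range_reflect]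
    apply Finset.sum_congr rfl
    intro j hj
    have := mem_range.1 hj
    rw [Nat.sub_sub, Nat.cast_sub (by omega)]
    push_cast; congr 1; ring
  have h2 : ∑ r ∈ range p, 1 / (r : ℝ) ≤ harmonic p := by
    rw [hH]
    obtain ⟨q, hq⟩ : ∃ q, p = q + 1 := ⟨p - 1, by have := hpp.pos; omega⟩
    rw [hq, Finset.sum_range_succ', Finset.sum_range_succ]
    have : (0 : ℝ) ≤ 1 / ((q : ℝ) + 1) := by positivity
    push_cast
    simp only [div_zero, add_zero]
    linarith
  rw [← Finset.mul_sum, Finset.sum_add_distrib, h1]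
  have := harmonic_le_one_add_log p
  linarith

/-- one-dimensional interval -/
noncomputable def Ibox (p : ℕ) [Fact p.Prime] (α β : ℝ) : Finset (ZMod p) :=
  univ.filter (fun x : ZMod p => α ≤ (x.val : ℝ) / p ∧ (x.val : ℝ) / p < β)

lemma Ibox_sum {M : Type*} [AddCommMonoid M] (α β : ℝ) (hβ : β ≤ 1) (f : ZMod p → M) :
    ∑ x ∈ Ibox p α β, f x = ∑ k ∈ Ico ⌈α * p⌉₊ ⌈β * p⌉₊, f k := by
  have hpp : p.Prime := Fact.out
  have hp0 : (0 : ℝ) < p := by exact_mod_cast hpp.pos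
  have hβp : ⌈β * p⌉₊ ≤ p := by
    rw [Nat.ceil_le]; nlinarith
  apply Finset.sum_bij' (fun (x : ZMod p) _ => x.val) (fun (k : ℕ) _ => (k : ZMod p))
  · intro x hx
    have := (Finset.mem_filter.1 hx).2
    rw [le_div_iff₀ hp0, div_lt_iff₀ hp0] at this
    exact Finset.mem_Ico.2 ⟨Nat.ceil_le.2 this.1, Nat.lt_ceil.2 this.2⟩
  · intro k hk
    obtain ⟨h1, h2⟩ := Finset.mem_Ico.1 hk
    refine Finset.mem_filter.2 ⟨mem_univ _, ?_⟩
    rw [ZMod.val_cast_of_lt (h2.trans_le hβp), le_div_iff₀ hp0, div_lt_iff₀ hp0]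
    exact ⟨Nat.ceil_le.1 h1, Nat.lt_ceil.1 h2⟩
  · intro x _; simp
  · intro k hk
    exact ZMod.val_cast_of_lt ((Finset.mem_Ico.1 hk).2.trans_le hβp)
  · intro x _; simp

lemma Ibox_card (α β : ℝ) (hα : 0 ≤ α) (hαβ : α ≤ β) (hβ : β ≤ 1) :
    |((Ibox p α β).card : ℝ) / p - (β - α)| ≤ 1 / p ∧ ((Ibox p α β).card : ℝ) / p ≤ 1 := by
  have hpp : p.Prime := Fact.out
  have hp0 : (0 : ℝ) < p := by exact_mod_cast hpp.pos
  have h1 : (Ibox p α β).card = ⌈β * p⌉₊ - ⌈α * p⌉₊ := by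
    have := Ibox_sum (p := p) α β hβ (fun _ => (1 : ℕ))
    simpa using this
  have hle : ⌈α * p⌉₊ ≤ ⌈β * p⌉₊ := Nat.ceil_le_ceil (by gcongr)
  have a1 := Nat.le_ceil (α * p)
  have a2 := Nat.ceil_lt_add_one (a := α * p) (by positivity)
  have b1 := Nat.le_ceil (β * p)
  have b2 := Nat.ceil_lt_add_one (a := β * p) (mul_nonneg (hα.trans hαβ) hp0.le)
  constructor
  · rw [h1, Nat.cast_sub hle]
    have e : (((⌈β * p⌉₊ : ℝ) - ⌈α * p⌉₊) / p - (β - α)) =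
        (((⌈β * p⌉₊ : ℝ) - β * p) - (⌈α * p⌉₊ - α * p)) / p := by field_simp; ring
    rw [e, abs_div, abs_of_pos hp0]
    gcongr
    rw [abs_le]; constructor <;> linarith
  · rw [div_le_one hp0]
    have : (Ibox p α β).card ≤ p := (Finset.card_le_univ _).trans (by rw [ZMod.card])
    exact_mod_cast this

/-- Fourier coefficient -/
noncomputable def Icoef (p : ℕ) [Fact p.Prime] (α β : ℝ) (a : ZMod p) : ℂ :=
  (1 / p : ℂ) * ∑ x ∈ Ibox p α β, χ (-(a * x))

lemma Icoef_norm (α β : ℝ) (hα : 0 ≤ α) (hαβ : α ≤ β) (hβ : β ≤ 1) :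
    ∑ a, ‖Icoef p α β a‖ ≤ 2 + Real.log p := by
  have hpp : p.Prime := Fact.out
  have hp0 : (0 : ℝ) < p := by exact_mod_cast hpp.pos
  set g : ℕ → ℝ := fun r => (1 / 2) * (1 / (r : ℝ) + 1 / ((p : ℝ) - r)) with hg
  have hle : ⌈α * p⌉₊ ≤ ⌈β * p⌉₊ := Nat.ceil_le_ceil (by gcongr)
  have hb : ∀ a : ZMod p, ‖Icoef p α β a‖ ≤ (if a = 0 then 1 else 0) + g a.val := by
    intro a
    by_cases ha : a = 0
    · subst ha
      have h0 : 0 ≤ g (0 : ZMod p).val := by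
        simp only [hg, ZMod.val_zero]; simp
      have : Icoef p α β 0 = (((Ibox p α β).card : ℝ) / p : ℝ) := by
        simp [Icoef]; ring
      rw [if_pos rfl, this, Complex.norm_real, Real.norm_of_nonneg (by positivity)]
      linarith [(Ibox_card (p := p) α β hα hαβ hβ).2]
    · rw [if_neg ha, zero_add]
      obtain ⟨h1, h2⟩ := chi_sub_one_inv (-a) (neg_ne_zero.2 ha)
      have hva : ((-a).val : ℝ) = p - a.val := by
        haveI : NeZero a := ⟨ha⟩
        rw [ZMod.val_neg_of_ne_zero, Nat.cast_sub (ZMod.val_lt a).le]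
      have hs : ∑ x ∈ Ibox p α β, χ (-(a * x)) = ∑ k ∈ Ico ⌈α * p⌉₊ ⌈β * p⌉₊, (χ (-a)) ^ k := by
        rw [Ibox_sum α β hβ]
        apply Finset.sum_congr rfl; intro k _
        rw [← AddChar.map_nsmul_eq_pow]; congr 1; rw [nsmul_eq_mul]; ring
      rw [Icoef, hs, geom_sum_Ico h2 hle, norm_mul]
      have h3 : ‖χ (-a) ^ ⌈β * p⌉₊ - χ (-a) ^ ⌈α * p⌉₊‖ ≤ 2 := by
        refine (norm_sub_le _ _).trans ?_
        rw [norm_pow, norm_pow, chi_norm]; norm_num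
      have h4 : ‖(1 / p : ℂ)‖ = 1 / p := by simp
      rw [h4, norm_div]
      calc _ ≤ 1 / (p : ℝ) * (2 / ‖χ (-a) - 1‖) := by gcongr
        _ ≤ 1 / (p : ℝ) * (p * ((1 / 2) * (1 / ((-a).val : ℝ) + 1 / ((p : ℝ) - (-a).val)))) := by gcongr
        _ = g a.val := by
          rw [hva, hg]; simp only [sub_sub_cancel]
          rw [← mul_assoc, one_div_mul_cancel hp0.ne', one_mul, add_comm]
  refine (Finset.sum_le_sum fun a _ => hb a).trans ?_
  rw [Finset.sum_add_distrib, sum_zmod_val g, Finset.sum_ite_eq' univ (0 : ZMod p), if_pos (mem_univ _)]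
  have := harmonic_bound (p := p)
  simp only [hg]; linarith

lemma Icoef_expand (α β : ℝ) (y : ZMod p) :
    ∑ a, Icoef p α β a * χ (a * y) = if y ∈ Ibox p α β then 1 else 0 := by
  have hpp : p.Prime := Fact.out
  have hp0 : (p : ℂ) ≠ 0 := by exact_mod_cast hpp.ne_zero
  have h : ∀ a, Icoef p α β a * χ (a * y) = (1 / p : ℂ) * ∑ x ∈ Ibox p α β, χ (a * (y - x)) := by
    intro a
    rw [Icoef, mul_assoc, Finset.sum_mul]
    congr 1
    apply Finset.sum_congr rfl; intro x _
    rw [← AddChar.map_add_eq_mul]; congr 1; ring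
  rw [Finset.sum_congr rfl fun a _ => h a, ← Finset.mul_sum, Finset.sum_comm,
    Finset.sum_congr rfl fun x _ => chi_sum (y - x)]
  simp_rw [sub_eq_zero]
  rw [Finset.sum_ite_eq (Ibox p α β) y]
  split_ifs
  · field_simp
  · simp

theorem discrep_bound (s N : ℕ) (hN : 0 < N) (v : ℕ → Fin s → ZMod p) (δ : ℝ) (hδ0 : 0 ≤ δ)
    (hδ : ∀ a : Fin s → ZMod p, a ≠ 0 → ‖∑ n ∈ range N, χ (∑ j, a j * v n j)‖ ≤ N * δ) :
    discrepancy s N (fun n j => ((v n j).val : ℝ) / (p : ℝ)) ≤ δ * (2 + Real.log p) ^ s + s * (1 / p) := by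
  classical
  have hpp : p.Prime := Fact.out
  have hp0 : (0 : ℝ) < p := by exact_mod_cast hpp.pos
  have hN0 : (0 : ℝ) < N := by exact_mod_cast hN
  unfold discrepancy
  apply csSup_le
  · exact ⟨_, fun _ => 0, fun _ => 0, fun _ => by norm_num, rfl⟩
  rintro D ⟨α, β, hαβ, rfl⟩
  set c : Fin s → ZMod p → ℂ := fun j => Icoef p (α j) (β j) with hc
  set S : (Fin s → ZMod p) → ℂ := fun a => ∑ n ∈ range N, χ (∑ j, a j * v n j) with hS
  set T : ℕ := ((range N).filter fun n => ∀ j, α j ≤ ((v n j).val : ℝ) / p ∧ ((v n j).val : ℝ) / p < β j).card with hT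
  have h1 : ∀ n, (if (∀ j, α j ≤ ((v n j).val : ℝ) / p ∧ ((v n j).val : ℝ) / p < β j) then (1 : ℂ) else 0) =
      ∑ a : Fin s → ZMod p, (∏ j, c j (a j)) * χ (∑ j, a j * v n j) := by
    intro n
    have e1 : (if (∀ j, α j ≤ ((v n j).val : ℝ) / p ∧ ((v n j).val : ℝ) / p < β j) then (1 : ℂ) else 0) =
        ∏ j, if v n j ∈ Ibox p (α j) (β j) then (1 : ℂ) else 0 := by
      rw [Finset.prod_ite_zero]
      simp [Ibox]
    rw [e1, Finset.prod_congr rfl fun j _ => (Icoef_expand (α j) (β j) (v n j)).symm,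
      Finset.prod_univ_sum, Fintype.piFinset_univ]
    apply Finset.sum_congr rfl; intro a _
    rw [Finset.prod_mul_distrib, chi_map_sum]
  have h2 : (T : ℂ) = ∑ a : Fin s → ZMod p, (∏ j, c j (a j)) * S a := by
    rw [hT, Finset.card_filter]
    push_cast
    rw [Finset.sum_congr rfl fun n _ => h1 n, Finset.sum_comm]
    apply Finset.sum_congr rfl; intro a _
    rw [← Finset.mul_sum]
  set V : ℝ := ∏ j, ((Ibox p (α j) (β j)).card : ℝ) / p with hV
  have h0 : (∏ j, c j ((0 : Fin s → ZMod p) j)) * S 0 = ((N * V : ℝ) : ℂ) := by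
    have e1 : S 0 = N := by simp [hS]
    have e2 : ∀ j, c j ((0 : Fin s → ZMod p) j) = ((((Ibox p (α j) (β j)).card : ℝ) / p : ℝ) : ℂ) := by
      intro j; simp [hc, Icoef]; ring
    rw [e1, Finset.prod_congr rfl fun j _ => e2 j, hV]
    push_cast; ring
  have h3 : |(T : ℝ) - N * V| ≤ N * (δ * (2 + Real.log p) ^ s) := by
    have e : (((T : ℝ) - N * V : ℝ) : ℂ) = ∑ a ∈ univ.erase (0 : Fin s → ZMod p), (∏ j, c j (a j)) * S a := by
      rw [Complex.ofReal_sub, ← h0, Complex.ofReal_natCast, h2,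
        ← Finset.add_sum_erase univ _ (mem_univ (0 : Fin s → ZMod p))]
      ring
    rw [← Real.norm_eq_abs, ← Complex.norm_real, e]
    calc _ ≤ ∑ a ∈ univ.erase (0 : Fin s → ZMod p), ‖(∏ j, c j (a j)) * S a‖ := norm_sum_le _ _
      _ ≤ ∑ a ∈ univ.erase (0 : Fin s → ZMod p), (∏ j, ‖c j (a j)‖) * (N * δ) := by
          apply Finset.sum_le_sum; intro a ha
          rw [norm_mul, norm_prod]
          have := hδ a (Finset.mem_erase.1 ha).1
          gcongr
      _ ≤ ∑ a : Fin s → ZMod p, (∏ j, ‖c j (a j)‖) * (N * δ) :=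
          Finset.sum_le_sum_of_subset_of_nonneg (Finset.subset_univ _) (fun a _ _ => by positivity)
      _ = (∏ j, ∑ x, ‖c j x‖) * (N * δ) := by
          rw [← Finset.sum_mul, Finset.prod_univ_sum, Fintype.piFinset_univ]
      _ ≤ (∏ j : Fin s, (2 + Real.log p)) * (N * δ) := by
          gcongr with j
          exact Icoef_norm (α j) (β j) (hαβ j).1 (hαβ j).2.1 (hαβ j).2.2
      _ = _ := by simp; ring
  have h4 : |V - ∏ j, (β j - α j)| ≤ s * (1 / p) := by
    have := abs_prod_sub_prod univ (fun j : Fin s => ((Ibox p (α j) (β j)).card : ℝ) / p)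
      (fun j => β j - α j)
      (fun j => ⟨by positivity, (Ibox_card (p := p) (α j) (β j) (hαβ j).1 (hαβ j).2.1 (hαβ j).2.2).2⟩)
      (fun j => ⟨by linarith [(hαβ j).2.1], by linarith [(hαβ j).1, (hαβ j).2.2]⟩) (1 / p)
      (fun j => (Ibox_card (p := p) (α j) (β j) (hαβ j).1 (hαβ j).2.1 (hαβ j).2.2).1)
    rw [Finset.card_univ, Fintype.card_fin] at this
    exact this
  have h5 : |(T : ℝ) / N - V| ≤ δ * (2 + Real.log p) ^ s := by
    have e : (T : ℝ) / N - V = (T - N * V) / N := by field_simp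
    rw [e, abs_div, abs_of_pos hN0, div_le_iff₀ hN0]
    linarith
  calc _ = |((T : ℝ) / N - V) + (V - ∏ j, (β j - α j))| := by congr 1; ring
    _ ≤ _ := (abs_add_le _ _).trans (add_le_add h5 h4)

end Discrep

section Final
open Finset
local notation "χ" => (ZMod.stdAddChar : AddChar (ZMod _) ℂ)

lemma injOn_of_min_period {X : Type*} (u : ℕ → X) (f : X → X) (τ : ℕ) (hu : ∀ n, u (n + 1) = f (u n))
    (hτ : 0 < τ) (hper : ∀ n, u (n + τ) = u n)
    (hmin : ∀ t, 0 < t → (∀ n, u (n + t) = u n) → τ ≤ t) (N : ℕ) (hN : N ≤ τ) :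
    Set.InjOn u (range N : Finset ℕ) := by
  have hperk : ∀ k n, u (n + k * τ) = u n := by
    intro k; induction k with
    | zero => intro n; simp
    | succ k ih => intro n; rw [Nat.succ_mul, ← add_assoc, hper, ih]
  have key : ∀ a b, a < b → b < N → u a = u b → False := by
    intro a b hab hb h
    have h1 : ∀ k, u (a + k) = u (b + k) := by
      intro k; induction k with
      | zero => exact h
      | succ k ih => rw [← add_assoc, ← add_assoc, hu, hu, ih]
    have h2 : ∀ n, u (n + (b - a)) = u n := by
      intro n
      have ha : a ≤ a * τ := Nat.le_mul_of_pos_right a hτ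
      have := h1 (n + (a * τ - a))
      rw [show a + (n + (a * τ - a)) = n + a * τ by omega,
        show b + (n + (a * τ - a)) = (n + (b - a)) + a * τ by omega, hperk, hperk] at this
      exact this.symm
    have := hmin (b - a) (by omega) h2
    omega
  intro a ha b hb h
  have ha' := mem_range.1 (mem_coe.1 ha)
  have hb' := mem_range.1 (mem_coe.1 hb)
  rcases lt_trichotomy a b with hab | hab | hab
  · exact (key a b hab hb' h).elim
  · exact hab
  · exact (key b a hab ha' h.symm).elim

lemma card_last_bound {p : ℕ} [Fact p.Prime] (m N : ℕ) (u : ℕ → Fin (m + 1) → ZMod p)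
    (hinj : Set.InjOn u (range N : Finset ℕ)) :
    N ≤ ((range N).image fun n => u n (Fin.last m)).card * p ^ m := by
  classical
  have h : ((range N).image (fun n => (u n (Fin.last m), (Fin.init (u n) : Fin m → ZMod p)))).card = N := by
    rw [Finset.card_image_of_injOn, card_range]
    intro a ha b hb hab
    apply hinj ha hb
    have e := Prod.mk.inj hab
    rw [← Fin.snoc_init_self (u a), ← Fin.snoc_init_self (u b), e.1, e.2]
  have h2 : ((range N).image (fun n => (u n (Fin.last m), (Fin.init (u n) : Fin m → ZMod p)))) ⊆
      ((range N).image fun n => u n (Fin.last m)) ×ˢ (univ : Finset (Fin m → ZMod p)) := by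
    intro x hx
    obtain ⟨n, hn, rfl⟩ := Finset.mem_image.1 hx
    exact Finset.mem_product.2 ⟨Finset.mem_image.2 ⟨n, hn, rfl⟩, mem_univ _⟩
  have h3 := Finset.card_le_card h2
  rw [h, Finset.card_product, Finset.card_univ, Fintype.card_fun, ZMod.card, Fintype.card_fin] at h3
  exact h3

lemma discrepancy_le_one (s N : ℕ) (P : ℕ → Fin s → ℝ) : discrepancy s N P ≤ 1 := by
  unfold discrepancy
  apply csSup_le
  · exact ⟨_, fun _ => 0, fun _ => 0, fun _ => by norm_num, rfl⟩
  rintro D ⟨α, β, hαβ, rfl⟩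
  have h1 : 0 ≤ ∏ j, (β j - α j) := prod_nonneg fun j _ => by linarith [(hαβ j).2.1]
  have h2 : ∏ j, (β j - α j) ≤ 1 := prod_le_one (fun j _ => by linarith [(hαβ j).2.1])
    (fun j _ => by linarith [(hαβ j).1, (hαβ j).2.2])
  set T := ((Finset.range N).filter fun n => ∀ j, α j ≤ P n j ∧ P n j < β j).card with hT
  have h3 : (0 : ℝ) ≤ (T : ℝ) / N := by positivity
  have h4 : (T : ℝ) / N ≤ 1 := by
    apply div_le_one_of_le₀ _ (by positivity)
    have : T ≤ N := (card_filter_le _ _).trans (by rw [card_range])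
    exact_mod_cast this
  rw [abs_le]; constructor <;> linarith

lemma final_num (m : ℕ) (γ₀ C : ℝ) (hγ₀ : 0 < γ₀) (hC : 0 < C) :
    ∃ γ c : ℝ, 0 < γ ∧ 0 < c ∧ ∀ p : ℕ, 1 ≤ p →
      C * (p : ℝ) ^ (-γ₀) * (2 + Real.log p) ^ (m + 1) + ((m + 1 : ℕ) : ℝ) * (1 / p) ≤ c * (p : ℝ) ^ (-γ) := by
  set η : ℝ := γ₀ / (2 * (m + 1)) with hη
  have hη0 : 0 < η := by positivity
  refine ⟨min γ₀ 1 / 2, C * (2 + 1 / η) ^ (m + 1) + (m + 1 : ℕ), by positivity, by positivity, ?_⟩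
  intro p hp
  have hp1 : (1 : ℝ) ≤ p := by exact_mod_cast hp
  have hp0 : (0 : ℝ) < p := by linarith
  have hl : 2 + Real.log p ≤ (2 + 1 / η) * (p : ℝ) ^ η := by
    have h1 := Real.log_le_rpow_div hp0.le hη0
    have h2 := Real.one_le_rpow hp1 hη0.le
    have : (2 + 1 / η) * (p : ℝ) ^ η = 2 * (p : ℝ) ^ η + (p : ℝ) ^ η / η := by ring
    rw [this]; linarith
  have hl0 : 0 ≤ 2 + Real.log p := by have := Real.log_nonneg hp1; linarith
  have hpow : (2 + Real.log p) ^ (m + 1) ≤ (2 + 1 / η) ^ (m + 1) * (p : ℝ) ^ (γ₀ / 2) := by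
    refine (pow_le_pow_left₀ hl0 hl _).trans (le_of_eq ?_)
    rw [mul_pow, ← Real.rpow_natCast ((p : ℝ) ^ η), ← Real.rpow_mul hp0.le]
    congr 2
    rw [hη]; push_cast; field_simp
  have hA : (p : ℝ) ^ (-γ₀) * (p : ℝ) ^ (γ₀ / 2) ≤ (p : ℝ) ^ (-(min γ₀ 1 / 2)) := by
    rw [← Real.rpow_add hp0]
    apply Real.rpow_le_rpow_of_exponent_le hp1
    have := min_le_left γ₀ 1
    linarith
  have hB : 1 / (p : ℝ) ≤ (p : ℝ) ^ (-(min γ₀ 1 / 2)) := by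
    rw [one_div, ← Real.rpow_neg_one]
    apply Real.rpow_le_rpow_of_exponent_le hp1
    have := min_le_right γ₀ 1
    linarith
  calc _ ≤ C * (p : ℝ) ^ (-γ₀) * ((2 + 1 / η) ^ (m + 1) * (p : ℝ) ^ (γ₀ / 2)) + ((m + 1 : ℕ) : ℝ) * (1 / p) := by
        gcongr
    _ = C * (2 + 1 / η) ^ (m + 1) * ((p : ℝ) ^ (-γ₀) * (p : ℝ) ^ (γ₀ / 2)) + ((m + 1 : ℕ) : ℝ) * (1 / p) := by ring
    _ ≤ C * (2 + 1 / η) ^ (m + 1) * (p : ℝ) ^ (-(min γ₀ 1 / 2)) + ((m + 1 : ℕ) : ℝ) * (p : ℝ) ^ (-(min γ₀ 1 / 2)) := by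
        gcongr
    _ = _ := by ring

end Final


theorem stmt6 (m d : ℕ) (hm : 1 ≤ m) (hd : 2 ≤ d) (ε : ℝ) (hε : 0 < ε) :
    ∃ γ c : ℝ, 0 < γ ∧ 0 < c ∧
      ∀ (s : ℕ → ℕ → ℕ) (p : ℕ), p.Prime →
        ∀ F : Fin (m + 1) → MvPolynomial (Fin (m + 1)) (ZMod p),
          IsFSystem m s F →
          (Finset.univ.sup fun i => (F i).totalDegree) = d →
          (∏ i ∈ Finset.range m, s i (i + 1)) ≠ 0 →
          ∀ (u : ℕ → Fin (m + 1) → ZMod p) (τ : ℕ),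
            (∀ n i, u (n + 1) i = MvPolynomial.eval (u n) (F i)) →
            0 < τ → (∀ n, u (n + τ) = u n) →
            (∀ t, 0 < t → (∀ n, u (n + t) = u n) → τ ≤ t) →
            ∀ N : ℕ, 0 < N → N ≤ τ → (p : ℝ) ^ ((m : ℝ) + ε) ≤ (N : ℝ) →
              discrepancy (m + 1) N (fun n j => ((u n j).val : ℝ) / (p : ℝ)) ≤
                c * (p : ℝ) ^ (-γ) := by
  obtain ⟨γ₁, hγ₁, C₁, hC₁, P₁, H₁⟩ := nonlin_sum m d hm ε hε
  obtain ⟨γ₂, hγ₂, P₂, H₂⟩ := lin_sum ε hε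
  have hγ₀ : 0 < min γ₁ γ₂ := lt_min hγ₁ hγ₂
  obtain ⟨γ, c, hγ, hc, hfin⟩ := final_num m (min γ₁ γ₂) (C₁ + 2) hγ₀ (by linarith)
  set P : ℝ := max 1 (max P₁ P₂) with hP
  have hP1 : 1 ≤ P := le_max_left _ _
  have hP0 : 0 < P := by linarith
  have hPγ : 0 < P ^ γ := Real.rpow_pos_of_pos hP0 _
  refine ⟨γ, c + P ^ γ, hγ, by positivity, ?_⟩
  intro s p hp F hF hdeg hprod u τ hu hτ hper hmin N hN hNτ hNp
  haveI : Fact p.Prime := ⟨hp⟩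
  have hp1 : (1 : ℝ) ≤ p := by exact_mod_cast hp.one_lt.le
  have hp0 : (0 : ℝ) < p := by linarith
  have hpγ : 0 < (p : ℝ) ^ (-γ) := Real.rpow_pos_of_pos hp0 _
  rcases lt_or_ge (p : ℝ) P with hsmall | hlarge
  · refine (discrepancy_le_one _ _ _).trans ?_
    have h1 : (p : ℝ) ^ γ ≤ P ^ γ := Real.rpow_le_rpow hp0.le hsmall.le hγ.le
    have h2 : (p : ℝ) ^ γ * (p : ℝ) ^ (-γ) = 1 := by
      rw [← Real.rpow_add hp0, add_neg_cancel, Real.rpow_zero]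
    calc (1 : ℝ) = (p : ℝ) ^ γ * (p : ℝ) ^ (-γ) := h2.symm
      _ ≤ (c + P ^ γ) * (p : ℝ) ^ (-γ) := by gcongr; linarith
  have hpP₁ : P₁ ≤ p := ((le_max_left _ _).trans (le_max_right _ _)).trans hlarge
  have hpP₂ : P₂ ≤ p := ((le_max_right _ _).trans (le_max_right _ _)).trans hlarge
  have hinj : Set.InjOn u (Finset.range N : Finset ℕ) :=
    injOn_of_min_period u (fun w i => MvPolynomial.eval w (F i)) τ (fun n => funext fun i => hu n i)
      hτ hper hmin N hNτ
  have hs : ∀ i < m, s i (i + 1) ≠ 0 := fun i hi =>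
    Finset.prod_ne_zero_iff.1 hprod i (Finset.mem_range.2 hi)
  have hdg : ∀ j, (F j).totalDegree ≤ d := fun j => by
    rw [← hdeg]
    exact Finset.le_sup (f := fun i => (F i).totalDegree) (Finset.mem_univ j)
  have e1 : (p : ℝ) ^ (-γ₁) ≤ (p : ℝ) ^ (-(min γ₁ γ₂)) :=
    Real.rpow_le_rpow_of_exponent_le hp1 (neg_le_neg (min_le_left _ _))
  have e2 : (p : ℝ) ^ (-γ₂) ≤ (p : ℝ) ^ (-(min γ₁ γ₂)) :=
    Real.rpow_le_rpow_of_exponent_le hp1 (neg_le_neg (min_le_right _ _))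
  have e0 : 0 < (p : ℝ) ^ (-(min γ₁ γ₂)) := Real.rpow_pos_of_pos hp0 _
  have hD := discrep_bound (m + 1) N hN u ((C₁ + 2) * (p : ℝ) ^ (-(min γ₁ γ₂))) (by positivity) (by
    intro a ha
    have hex : ∃ k : ℕ, ∃ hk : k < m + 1, a ⟨k, hk⟩ ≠ 0 := by
      obtain ⟨i, hi⟩ := Function.ne_iff.1 ha
      exact ⟨i, i.2, hi⟩
    classical
    obtain ⟨hk, hk0⟩ := Nat.find_spec hex
    set k := Nat.find hex with hkdef
    have hlt : ∀ j : Fin (m + 1), (j : ℕ) < k → a j = 0 := by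
      intro j hj
      have := Nat.find_min hex hj
      by_contra hne
      exact this ⟨j.2, hne⟩
    rcases Nat.lt_or_ge k m with hkm | hkm
    · refine (H₁ p hpP₁ s F hF hs hdg u hu N hinj hNp ⟨k, hk⟩ hkm a hk0 (fun j hj => hlt j hj)).trans ?_
      gcongr
      linarith
    · have hkeq : (⟨k, hk⟩ : Fin (m + 1)) = Fin.last m := Fin.ext (by simp; omega)
      rw [hkeq] at hk0
      have hkm' : k = m := by omega
      obtain ⟨g, h, hg, hFl⟩ := hF.1
      have hsum : ∀ n, ∑ j, a j * u n j = a (Fin.last m) * u n (Fin.last m) := by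
        intro n
        apply Finset.sum_eq_single
        · intro j _ hj
          rw [hlt j (by rw [hkm']; exact Fin.val_lt_last hj), zero_mul]
        · intro hh; exact (hh (Finset.mem_univ _)).elim
      simp_rw [hsum]
      have hcard := card_last_bound m N u hinj
      have hcard2 : (p : ℝ) ^ ε ≤ ((Finset.range N).image fun n => u n (Fin.last m)).card := by
        have h1 : (p : ℝ) ^ ((m : ℝ) + ε) ≤
            (((Finset.range N).image fun n => u n (Fin.last m)).card : ℝ) * (p : ℝ) ^ m :=
          hNp.trans (by exact_mod_cast hcard)
        rw [Real.rpow_add hp0, Real.rpow_natCast, mul_comm] at h1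
        exact le_of_mul_le_mul_right h1 (by positivity)
      refine (H₂ p hpP₂ (fun n => u n (Fin.last m)) g h hg ?_ N ?_ hcard2 _ hk0).trans ?_
      · intro n
        simp only [hu n, hFl]
        simp
      · refine le_trans (Real.rpow_le_rpow_of_exponent_le hp1 ?_) hNp
        have : (1 : ℝ) ≤ m := by exact_mod_cast hm
        linarith
      · gcongr
        linarith)
  refine hD.trans ((hfin p hp.one_lt.le).trans ?_)
  gcongr
  linarith
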